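/- arXiv:1212.2551 — 4 statements merged into one kernel-verified Lean document; each statement's English description precedes it below -/
import Mathlib

section
/- Let n ≥ 2 and let S be a finite set of unit vectors in ℝ^n with S = −S. If S is extreme (i.e., perfect and eutactic), then there exist ε > 0 and C > 0 such that whenever T : ℝ^n → ℝ^n is a linear map with ‖T − Id‖ < ε and ‖Tx‖ ≥ ‖x‖ for all x ∈ S, one has det T ≥ 1 + C‖TᵀT − Id‖. -/
open scoped RealInnerProductSpace
open Metric MeasureTheory

noncomputable section

abbrev Euc (n : ℕ) := EuclideanSpace ℝ (Fin n)

/-- The rank-one symmetric map `P_x : y ↦ ⟪y, x⟫ • x`. -/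
def projMap {F : Type*} [NormedAddCommGroup F] [InnerProductSpace ℝ F] (x : F) :
    F →ₗ[ℝ] F where
  toFun y := (⟪y, x⟫) • x
  map_add' y z := by simp [inner_add_left, add_smul]
  map_smul' c y := by simp [real_inner_smul_left, mul_smul]

/-- A configuration is perfect if the maps `P_x`, `x ∈ S`, span the symmetric maps. -/
def IsPerfectCfg {F : Type*} [NormedAddCommGroup F] [InnerProductSpace ℝ F]
    (S : Set F) : Prop :=
  ∀ T : F →ₗ[ℝ] F, T.IsSymmetric → T ∈ Submodule.span ℝ (projMap '' S)

/-- A configuration is eutactic if `Id = Σ_{x∈S} υ_x P_x` with `υ_x > 0`, `υ_x = υ_{-x}`. -/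
def IsEutacticCfg {F : Type*} [NormedAddCommGroup F] [InnerProductSpace ℝ F]
    (S : Set F) : Prop :=
  ∃ υ : F → ℝ, (∀ x ∈ S, 0 < υ x) ∧ (∀ x ∉ S, υ x = 0) ∧
    (Function.support υ).Finite ∧ (∀ x, υ x = υ (-x)) ∧
    ∑ᶠ x, υ x • projMap x = (LinearMap.id : F →ₗ[ℝ] F)

/-- A configuration is semi-eutactic if `Id = Σ_{x∈S} υ_x P_x` with `υ_x ≥ 0`, `υ_x = υ_{-x}`. -/
def IsSemiEutacticCfg {F : Type*} [NormedAddCommGroup F] [InnerProductSpace ℝ F]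
    (S : Set F) : Prop :=
  ∃ υ : F → ℝ, (∀ x ∈ S, 0 ≤ υ x) ∧ (∀ x ∉ S, υ x = 0) ∧
    (Function.support υ).Finite ∧ (∀ x, υ x = υ (-x)) ∧
    ∑ᶠ x, υ x • projMap x = (LinearMap.id : F →ₗ[ℝ] F)

/-- A configuration is extreme if it is perfect and eutactic. -/
def IsExtremeCfg {F : Type*} [NormedAddCommGroup F] [InnerProductSpace ℝ F]
    (S : Set F) : Prop :=
  IsPerfectCfg S ∧ IsEutacticCfg S

/-- Hilbert–Schmidt (Frobenius) norm of a linear map on `ℝ^n`. -/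
def frobNorm {n : ℕ} (T : Euc n →ₗ[ℝ] Euc n) : ℝ :=
  Real.sqrt (∑ j, ∑ i, (T (EuclideanSpace.single j 1) i) ^ 2)

/-- The lattice `T ℤ^n` as a set of points. -/
def latticeSet {n : ℕ} (T : Euc n →ₗ[ℝ] Euc n) : Set (Euc n) :=
  {v | ∃ z : Fin n → ℤ, v = T (∑ i, (z i : ℝ) • EuclideanSpace.single i 1)}

/-- A set is an (n-dimensional) lattice if it is `T ℤ^n` for an invertible `T`. -/
def IsLattice {n : ℕ} (Λ : Set (Euc n)) : Prop :=
  ∃ T : Euc n →ₗ[ℝ] Euc n, LinearMap.det T ≠ 0 ∧ Λ = latticeSet T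

/-- The determinant `d(Λ) = |det T|` of a lattice. -/
def latDet {n : ℕ} (Λ : Set (Euc n)) : ℝ :=
  sInf {d | ∃ T : Euc n →ₗ[ℝ] Euc n, Λ = latticeSet T ∧ d = |LinearMap.det T|}

/-- The metric `δ(Λ, Λ') = inf ‖T - T'‖` on the space of lattices. -/
def latDist {n : ℕ} (Λ Λ' : Set (Euc n)) : ℝ :=
  sInf {d | ∃ T T' : Euc n →ₗ[ℝ] Euc n,
    Λ = latticeSet T ∧ Λ' = latticeSet T' ∧ d = frobNorm (T - T')}

/-- The minimal norm `m(Λ)`. -/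
def minNorm {n : ℕ} (Λ : Set (Euc n)) : ℝ :=
  sInf {r | ∃ x ∈ Λ, x ≠ 0 ∧ r = ‖x‖ ^ 2}

/-- The set `S(Λ)` of minimal vectors of a lattice. -/
def minVecs {n : ℕ} (Λ : Set (Euc n)) : Set (Euc n) :=
  {x | x ∈ Λ ∧ x ≠ 0 ∧ ‖x‖ ^ 2 = minNorm Λ}

/-- An origin-symmetric convex body. -/
structure IsSymCB {n : ℕ} (K : Set (Euc n)) : Prop where
  convex : Convex ℝ K
  compact : IsCompact K
  nonempty_interior : (interior K).Nonempty
  symm : -K = K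

/-- A lattice is admissible for a body if it meets the interior only at the origin. -/
def IsAdmissible {n : ℕ} (Λ K : Set (Euc n)) : Prop :=
  Λ ∩ interior K ⊆ {0}

/-- The critical determinant `d_K`. -/
def critDet {n : ℕ} (K : Set (Euc n)) : ℝ :=
  sInf {d | ∃ Λ : Set (Euc n), IsLattice Λ ∧ IsAdmissible Λ K ∧ d = latDet Λ}

/-- A critical lattice of `K`: an admissible lattice attaining the critical determinant. -/
def IsCriticalLattice {n : ℕ} (Λ K : Set (Euc n)) : Prop :=
  IsLattice Λ ∧ IsAdmissible Λ K ∧ latDet Λ = critDet K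

/-- The optimal lattice packing fraction `φ(K) = 2⁻ⁿ vol(K) / d_K`. -/
def packFrac {n : ℕ} (K : Set (Euc n)) : ℝ :=
  (volume K).toReal / (2 ^ n * critDet K)

/-- The closed unit ball `Bⁿ`. -/
def unitBall (n : ℕ) : Set (Euc n) := Metric.closedBall 0 1

/-- The support function of a body. -/
def suppFn {n : ℕ} (K : Set (Euc n)) (x : Euc n) : ℝ :=
  sSup ((fun y => ⟪x, y⟫) '' K)

/-- The radial function of a body. -/
def radFn {n : ℕ} (K : Set (Euc n)) (x : Euc n) : ℝ :=
  sSup {t : ℝ | 0 ≤ t ∧ t • x ∈ K}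

section Helpers
open scoped Matrix.Norms.Frobenius

/-- The quadratic form functional `M ↦ xᵀ M x`, written as a trace. -/
def quadFn {n : ℕ} (x : Euc n) : Matrix (Fin n) (Fin n) ℝ →ₗ[ℝ] ℝ where
  toFun M := (Matrix.vecMulVec x.ofLp x.ofLp * M).trace
  map_add' M N := by simp [mul_add]
  map_smul' c M := by simp

lemma exists_coercive {n : ℕ} (S : Finset (Euc n))
    (hspan : ∀ M : Matrix (Fin n) (Fin n) ℝ, M.transpose = M →
      M ∈ Submodule.span ℝ ((fun x : Euc n => Matrix.vecMulVec x.ofLp x.ofLp) '' (S : Set (Euc n))))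
    (v : Euc n → ℝ) (hv : ∀ x ∈ S, 0 < v x)
    (hsum : ∑ x ∈ S, v x • Matrix.vecMulVec x.ofLp x.ofLp = (1 : Matrix (Fin n) (Fin n) ℝ)) :
    ∃ c > (0 : ℝ), ∀ M : Matrix (Fin n) (Fin n) ℝ, M.transpose = M →
      (∀ x ∈ S, 0 ≤ quadFn x M) → c * ‖M‖ ≤ M.trace := by
  let f : Matrix (Fin n) (Fin n) ℝ →ₗ[ℝ] (S → ℝ) × Matrix (Fin n) (Fin n) ℝ :=
    (LinearMap.pi fun x : S => v x.1 • quadFn x.1).prod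
      (LinearMap.id - (Matrix.transposeLinearEquiv (Fin n) (Fin n) ℝ ℝ).toLinearMap)
  have hf1 : ∀ M, (f M).1 = fun x : S => v x.1 * quadFn x.1 M := fun M => rfl
  have hf2 : ∀ M, (f M).2 = M - M.transpose := fun M => rfl
  have hker : LinearMap.ker f = ⊥ := by
    rw [LinearMap.ker_eq_bot']
    intro M hM
    have h1 : ∀ x ∈ S, quadFn x M = 0 := by
      intro x hx
      have := congrFun (congrArg Prod.fst hM) ⟨x, hx⟩
      rw [hf1] at this
      have h' : v x * quadFn x M = 0 := this
      exact (mul_eq_zero.mp h').resolve_left (hv x hx).ne'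
    have h2 : M.transpose = M := by
      have := congrArg Prod.snd hM
      rw [hf2] at this
      exact (sub_eq_zero.mp this).symm
    have h3 : ∀ N ∈ Submodule.span ℝ
        ((fun x : Euc n => Matrix.vecMulVec x.ofLp x.ofLp) '' (S : Set (Euc n))),
        (N * M).trace = 0 := by
      intro N hN
      induction hN using Submodule.span_induction with
      | mem y hy =>
        obtain ⟨x, hx, rfl⟩ := hy
        exact h1 x hx
      | zero => simp
      | add a b _ _ ha hb => simp [add_mul, ha, hb]
      | smul c a _ ha => simp [ha]
    have h4 := h3 M (hspan M h2)
    have h5 : (M.conjTranspose * M).trace = 0 := by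
      rw [Matrix.conjTranspose_eq_transpose_of_trivial, h2]; exact h4
    exact Matrix.trace_conjTranspose_mul_self_eq_zero_iff.mp h5
  obtain ⟨K, hK, hanti⟩ := f.exists_antilipschitzWith hker
  have hK' : (0 : ℝ) < K := hK
  refine ⟨(K : ℝ)⁻¹, by positivity, fun M hM hpos => ?_⟩
  have htr : M.trace = ∑ x ∈ S, v x * quadFn x M := by
    conv_lhs => rw [← one_mul M, ← hsum, Finset.sum_mul, Matrix.trace_sum]
    refine Finset.sum_congr rfl fun x _ => ?_
    rw [Matrix.smul_mul, Matrix.trace_smul]; rfl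
  have hterm : ∀ x ∈ S, 0 ≤ v x * quadFn x M := fun x hx =>
    mul_nonneg (hv x hx).le (hpos x hx)
  have htr0 : 0 ≤ M.trace := by rw [htr]; exact Finset.sum_nonneg hterm
  have hle : ‖f M‖ ≤ M.trace := by
    rw [Prod.norm_def, hf1, hf2, hM, sub_self, norm_zero]
    refine max_le ?_ htr0
    rw [pi_norm_le_iff_of_nonneg htr0]
    intro x
    rw [Real.norm_of_nonneg (hterm x.1 x.2), htr]
    exact Finset.single_le_sum (f := fun x => v x * quadFn x M) hterm x.2
  have h6 : ‖M‖ ≤ K * ‖f M‖ := by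
    have := hanti.le_mul_dist M 0
    simpa using this
  rw [inv_mul_le_iff₀ hK']
  exact h6.trans (mul_le_mul_of_nonneg_left hle hK'.le)

lemma det_lower {n : ℕ} (c : ℝ) (hc : 0 < c) :
    ∃ δ > (0 : ℝ), ∀ M : Matrix (Fin n) (Fin n) ℝ, ‖M‖ < δ →
      1 + M.trace - c * ‖M‖ ≤ (1 + M).det := by
  have hdiff : DifferentiableAt ℝ (fun M : Matrix (Fin n) (Fin n) ℝ => (1 + M).det) 0 := by
    have hent : ∀ i j, Differentiable ℝ (fun M : Matrix (Fin n) (Fin n) ℝ => M i j) := by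
      intro i j
      exact (LinearMap.toContinuousLinearMap
        (Matrix.entryLinearMap ℝ ℝ i j : Matrix (Fin n) (Fin n) ℝ →ₗ[ℝ] ℝ)).differentiable
    simp only [Matrix.det_apply, Matrix.add_apply]
    fun_prop
  have hfd := hdiff.hasFDerivAt
  set L := fderiv ℝ (fun M : Matrix (Fin n) (Fin n) ℝ => (1 + M).det) 0 with hL
  have hLtr : ∀ M, L M = M.trace := by
    intro M
    have h1 : HasDerivAt (fun t : ℝ => (1 + t • M).det) (L M) 0 := by
      have hl : HasDerivAt (fun t : ℝ => t • M) M 0 := by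
        have h0 := (hasDerivAt_id (0 : ℝ)).smul_const M
        rw [one_smul] at h0
        exact h0
      have hfd' : HasFDerivAt (fun M : Matrix (Fin n) (Fin n) ℝ => (1 + M).det) L
        ((0 : ℝ) • M) := by simpa using hfd
      exact HasFDerivAt.comp_hasDerivAt
        (l := fun M : Matrix (Fin n) (Fin n) ℝ => (1 + M).det)
        (f := fun t : ℝ => t • M) (0 : ℝ) hfd' hl
    have h2 : HasDerivAt (fun t : ℝ => (1 + t • M).det) M.trace 0 := by
      rw [funext fun t : ℝ => Matrix.det_one_add_smul t M]
      set p := (Matrix.det (1 + (Polynomial.X : Polynomial ℝ) • M.map Polynomial.C)).divX.divX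
      have h3 := (((hasDerivAt_id (0 : ℝ)).const_mul M.trace).const_add 1).add
        ((p.hasDerivAt 0).mul ((hasDerivAt_id (0 : ℝ)).pow 2))
      exact HasDerivAt.congr_deriv h3 (by simp)
    exact h1.unique h2
  have hlo := (hasFDerivAt_iff_isLittleO_nhds_zero.mp hfd).def hc
  obtain ⟨δ, hδ, hb⟩ := Metric.eventually_nhds_iff.mp hlo
  refine ⟨δ, hδ, fun M hM => ?_⟩
  have h := hb (y := M) (by simpa using hM)
  simp only [zero_add, add_zero, Matrix.det_one, Real.norm_eq_abs] at h
  have hMtr := hLtr M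
  erw [hMtr] at h
  linarith [(abs_le.mp h).1]

lemma matrix_bound {n : ℕ} (c : ℝ) (hc : 0 < c) :
    ∃ ε > (0 : ℝ), ∃ C > (0 : ℝ), ∀ A : Matrix (Fin n) (Fin n) ℝ, ‖A - 1‖ < ε →
      c * ‖A.transpose * A - 1‖ ≤ (A.transpose * A - 1).trace →
      1 + C * ‖A.transpose * A - 1‖ ≤ A.det := by
  obtain ⟨δ, hδ, hdet⟩ := det_lower (n := n) (c / 2) (by positivity)
  have e1 : ∀ᶠ A in nhds (1 : Matrix (Fin n) (Fin n) ℝ), 0 < A.det := by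
    have hcont : Continuous (fun A : Matrix (Fin n) (Fin n) ℝ => A.det) := by fun_prop
    exact hcont.continuousAt.eventually (lt_mem_nhds (by simp))
  have e2 : ∀ᶠ A in nhds (1 : Matrix (Fin n) (Fin n) ℝ),
      ‖A.transpose * A - 1‖ < min δ 1 := by
    have hcont : Continuous
      (fun A : Matrix (Fin n) (Fin n) ℝ => ‖A.transpose * A - 1‖) := by fun_prop
    exact hcont.continuousAt.eventually (gt_mem_nhds (by simpa using hδ))
  obtain ⟨ε, hε, hb⟩ := Metric.eventually_nhds_iff.mp (e1.and e2)
  refine ⟨ε, hε, min 1 (c / 6), by positivity, fun A hA htr => ?_⟩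
  obtain ⟨hpos, hq⟩ := hb (y := A) (by rwa [dist_eq_norm])
  have h1 := hdet _ (hq.trans_le (min_le_left _ _))
  have hq1 := hq.trans_le (min_le_right _ _)
  rw [add_sub_cancel, Matrix.det_mul, Matrix.det_transpose] at h1
  set q := ‖A.transpose * A - 1‖
  have hq0 : 0 ≤ q := norm_nonneg _
  set C := min 1 (c / 6)
  have hC0 : 0 < C := by positivity
  have hC1 : C ≤ 1 := min_le_left _ _
  have hC2 : C ≤ c / 6 := min_le_right _ _
  refine abs_le_of_sq_le_sq' ?_ hpos.le |>.2
  have h2 : 1 + c / 2 * q ≤ A.det ^ 2 := by nlinarith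
  have h3 : C * C * (q * q) ≤ C * q := by
    have : C * C ≤ C := by nlinarith
    have : q * q ≤ q := by nlinarith
    exact mul_le_mul ‹_› ‹_› (by positivity) hC0.le
  have h4 : C * q ≤ c / 6 * q := mul_le_mul_of_nonneg_right hC2 hq0
  nlinarith

/-- The matrix of a linear map in the standard basis. -/
def stdMat {n : ℕ} (T : Euc n →ₗ[ℝ] Euc n) : Matrix (Fin n) (Fin n) ℝ :=
  LinearMap.toMatrix (EuclideanSpace.basisFun (Fin n) ℝ).toBasis
    (EuclideanSpace.basisFun (Fin n) ℝ).toBasis T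

lemma stdMat_apply {n : ℕ} (T : Euc n →ₗ[ℝ] Euc n) (i j : Fin n) :
    stdMat T i j = T (EuclideanSpace.single j 1) i := by
  simp [stdMat, LinearMap.toMatrix_apply]

lemma frobNorm_eq {n : ℕ} (T : Euc n →ₗ[ℝ] Euc n) : frobNorm T = ‖stdMat T‖ := by
  rw [Matrix.frobenius_norm_def, frobNorm, Real.sqrt_eq_rpow, Finset.sum_comm]
  simp [stdMat_apply]

lemma stdMat_projMap {n : ℕ} (x : Euc n) :
    stdMat (projMap x) = Matrix.vecMulVec x.ofLp x.ofLp := by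
  ext i j
  simp [stdMat_apply, projMap, Matrix.vecMulVec_apply, EuclideanSpace.inner_single_left, mul_comm]

lemma quadFn_stdMat {n : ℕ} (x : Euc n) (T : Euc n →ₗ[ℝ] Euc n) :
    quadFn x (stdMat T) = ⟪x, T x⟫ := by
  have h : (stdMat T).mulVec x.ofLp = (T x).ofLp := by
    have := LinearMap.toMatrix_mulVec_repr (EuclideanSpace.basisFun (Fin n) ℝ).toBasis
      (EuclideanSpace.basisFun (Fin n) ℝ).toBasis T x
    have hr : ∀ y : Euc n,
        ⇑((EuclideanSpace.basisFun (Fin n) ℝ).toBasis.repr y) = y.ofLp := by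
      intro y
      ext i
      simp
    rw [hr, hr] at this
    exact this
  change (Matrix.vecMulVec x.ofLp x.ofLp * stdMat T).trace = _
  rw [Matrix.trace_mul_comm, Matrix.mul_vecMulVec, h, Matrix.trace_vecMulVec]
  simp [PiLp.inner_apply, dotProduct, mul_comm]

lemma stdMat_adjoint_comp {n : ℕ} (T : Euc n →ₗ[ℝ] Euc n) :
    stdMat (LinearMap.adjoint T ∘ₗ T - LinearMap.id)
      = (stdMat T).transpose * stdMat T - 1 := by
  simp only [stdMat, map_sub, LinearMap.toMatrix_id]
  rw [LinearMap.toMatrix_comp _ (EuclideanSpace.basisFun (Fin n) ℝ).toBasis,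
    LinearMap.toMatrix_adjoint, Matrix.conjTranspose_eq_transpose_of_trivial]

end Helpers

/-- Theorem 3.2(i): if `S` is an extreme configuration of unit vectors,
then there are `ε, C > 0` such that any linear map `T` with `‖T - Id‖ < ε` and
`‖Tx‖ ≥ ‖x‖` for all `x ∈ S` satisfies `det T ≥ 1 + C‖TᵀT - Id‖`. -/
theorem extreme_det_lower_bound (n : ℕ) (hn : 2 ≤ n) (S : Finset (Euc n))
    (hunit : ∀ x ∈ S, ‖x‖ = 1) (hsym : ∀ x ∈ S, -x ∈ S)
    (hextreme : IsExtremeCfg (↑S : Set (Euc n))) :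
    ∃ ε > (0 : ℝ), ∃ C > (0 : ℝ), ∀ T : Euc n →ₗ[ℝ] Euc n,
      frobNorm (T - LinearMap.id) < ε →
      (∀ x ∈ S, ‖x‖ ≤ ‖T x‖) →
      1 + C * frobNorm (LinearMap.adjoint T ∘ₗ T - LinearMap.id) ≤ LinearMap.det T := by
  obtain ⟨hperf, v, hv, hv0, hfin, -, hid⟩ := hextreme
  have hspan : ∀ M : Matrix (Fin n) (Fin n) ℝ, M.transpose = M →
      M ∈ Submodule.span ℝ
        ((fun x : Euc n => Matrix.vecMulVec x.ofLp x.ofLp) '' (S : Set (Euc n))) := by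
    intro M hM
    let b := (EuclideanSpace.basisFun (Fin n) ℝ)
    let e := LinearMap.toMatrix b.toBasis b.toBasis
    have he : ∀ T, e T = stdMat T := fun T => rfl
    have hsymm : (e.symm M).IsSymmetric := by
      rw [LinearMap.isSymmetric_iff_isSelfAdjoint, LinearMap.isSelfAdjoint_iff']
      apply e.injective
      have := LinearMap.toMatrix_adjoint b b (e.symm M)
      change e _ = (e _).conjTranspose at this
      rw [this, LinearEquiv.apply_symm_apply, Matrix.conjTranspose_eq_transpose_of_trivial, hM]
    have hmem := Submodule.mem_map_of_mem (f := e.toLinearMap) (hperf _ hsymm)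
    rw [Submodule.map_span, Set.image_image] at hmem
    simp only [LinearEquiv.coe_coe, LinearEquiv.apply_symm_apply] at hmem
    simpa only [he, stdMat_projMap] using hmem
  have hsum : ∑ x ∈ S, v x • Matrix.vecMulVec x.ofLp x.ofLp
      = (1 : Matrix (Fin n) (Fin n) ℝ) := by
    rw [finsum_eq_sum_of_support_subset (s := S)] at hid
    · have := congrArg stdMat hid
      simp only [stdMat, map_sum, map_smul, LinearMap.toMatrix_id] at this
      rw [← this]
      exact Finset.sum_congr rfl fun x _ => by rw [← stdMat_projMap]; rfl
    · intro x hx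
      by_contra hxS
      exact hx (by simp [hv0 x hxS])
  obtain ⟨c, hc, hcoer⟩ := exists_coercive S hspan v hv hsum
  obtain ⟨ε, hε, C, hC, hmain⟩ := matrix_bound (n := n) c hc
  refine ⟨ε, hε, C, hC, fun T hT hTS => ?_⟩
  have hdet : LinearMap.det T = (stdMat T).det := (LinearMap.det_toMatrix _ T).symm
  rw [frobNorm_eq, stdMat_adjoint_comp, hdet]
  apply hmain
  · rw [frobNorm_eq] at hT
    simpa only [stdMat, map_sub, LinearMap.toMatrix_id] using hT
  · apply hcoer
    · simp [Matrix.transpose_mul]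
    · intro x hx
      rw [← stdMat_adjoint_comp, quadFn_stdMat]
      simp only [LinearMap.sub_apply, LinearMap.comp_apply, LinearMap.id_apply, inner_sub_right,
        LinearMap.adjoint_inner_right, real_inner_self_eq_norm_sq]
      have := hTS x hx
      have h0 := norm_nonneg x
      nlinarith

end
end

section
/- Let n ≥ 2 and let S be a finite set of unit vectors in ℝ^n with S = −S. If S is not extreme, then for every ε > 0 there exists a linear map T : ℝ^n → ℝ^n with ‖T − Id‖ < ε, ‖Tx‖ ≥ ‖x‖ for all x ∈ S, and det T < 1. -/
open scoped RealInnerProductSpace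
open Metric MeasureTheory

noncomputable section

lemma det_one_add_lt {n : ℕ} (A : Euc n →ₗ[ℝ] Euc n) (hA : A.IsSymmetric) (hA0 : A ≠ 0)
    (htr : LinearMap.trace ℝ _ A ≤ 0) :
    ∃ δ > (0 : ℝ), ∀ t, 0 < t → t < δ → LinearMap.det (LinearMap.id + t • A) < 1 := by
  have hn : Module.finrank ℝ (Euc n) = n := by simp
  set l := hA.eigenvalues hn with hl
  set b := hA.eigenvectorBasis hn with hb
  have hAb : ∀ i, A (b i) = l i • b i := fun i => by
    exact hA.apply_eigenvectorBasis hn i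
  have hdet : ∀ t : ℝ, LinearMap.det (LinearMap.id + t • A) = ∏ i, (1 + t * l i) := by
    intro t
    rw [← LinearMap.det_toMatrix b.toBasis]
    have : LinearMap.toMatrix b.toBasis b.toBasis (LinearMap.id + t • A)
        = Matrix.diagonal (fun i => 1 + t * l i) := by
      ext i j
      rw [LinearMap.toMatrix_apply]
      have h1 : (LinearMap.id + t • A : Euc n →ₗ[ℝ] Euc n) (b.toBasis j) = (1 + t * l j) • b.toBasis j := by
        simp [hAb, add_smul, mul_smul]
      rw [h1, map_smul, Module.Basis.repr_self]
      by_cases hij : i = j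
      · subst hij; simp
      · simp [Matrix.diagonal_apply_ne _ hij, Finsupp.single_apply, Ne.symm hij, hij]
    rw [this, Matrix.det_diagonal]
  have htr' : ∑ i, l i ≤ 0 := by
    have := hA.trace_eq_sum_eigenvalues hn
    rw [this] at htr
    simpa using htr
  have hne : ∃ i, l i ≠ 0 := by
    by_contra! h
    apply hA0
    apply b.toBasis.ext
    intro i
    simp [hAb, h]
  have hM : 0 < 1 + ∑ i, |l i| := by positivity
  refine ⟨1 / (1 + ∑ i, |l i|), by positivity, fun t ht htd => ?_⟩
  rw [hdet]
  rw [lt_div_iff₀ hM] at htd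
  have hpos : ∀ i, 0 < 1 + t * l i := by
    intro i
    have h1 : |l i| ≤ ∑ i, |l i| :=
      Finset.single_le_sum (f := fun i => |l i|) (fun _ _ => abs_nonneg _) (Finset.mem_univ i)
    have h2 : -|l i| ≤ l i := neg_abs_le _
    nlinarith
  obtain ⟨i0, hi0⟩ := hne
  calc ∏ i, (1 + t * l i) < ∏ i, Real.exp (t * l i) := by
        apply Finset.prod_lt_prod (fun i _ => hpos i)
        · intro i _
          have := Real.add_one_le_exp (t * l i); linarith
        · refine ⟨i0, Finset.mem_univ _, ?_⟩
          have := Real.add_one_lt_exp (x := t * l i0) (mul_ne_zero ht.ne' hi0); linarith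
    _ = Real.exp (t * ∑ i, l i) := by rw [← Real.exp_sum, Finset.mul_sum]
    _ ≤ 1 := by
        rw [Real.exp_le_one_iff]
        exact mul_nonpos_of_nonneg_of_nonpos ht.le htr'

lemma frobNorm_smul {n : ℕ} (t : ℝ) (ht : 0 ≤ t) (A : Euc n →ₗ[ℝ] Euc n) :
    frobNorm (t • A) = t * frobNorm A := by
  unfold frobNorm
  have : (∑ j, ∑ i, ((t • A) (EuclideanSpace.single j 1) i) ^ 2)
      = t ^ 2 * ∑ j, ∑ i, (A (EuclideanSpace.single j 1) i) ^ 2 := by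
    simp [Finset.mul_sum, mul_pow]
  rw [this, Real.sqrt_mul (by positivity), Real.sqrt_sq ht]

lemma exists_of_direction {n : ℕ} (S : Finset (Euc n)) (A : Euc n →ₗ[ℝ] Euc n)
    (hA : A.IsSymmetric) (hA0 : A ≠ 0) (htr : LinearMap.trace ℝ _ A ≤ 0)
    (hS : ∀ x ∈ S, 0 ≤ ⟪A x, x⟫) (ε : ℝ) (hε : 0 < ε) :
    ∃ T : Euc n →ₗ[ℝ] Euc n,
      frobNorm (T - LinearMap.id) < ε ∧
      (∀ x ∈ S, ‖x‖ ≤ ‖T x‖) ∧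
      LinearMap.det T < 1 := by
  obtain ⟨δ, hδ, h⟩ := det_one_add_lt A hA hA0 htr
  have hF : 0 ≤ frobNorm A := Real.sqrt_nonneg _
  set t := min (δ / 2) (ε / (1 + frobNorm A) / 2) with ht
  have hq : 0 < ε / (1 + frobNorm A) := by positivity
  have ht0 : 0 < t := by rw [ht]; positivity
  have ht1 : t < δ := lt_of_le_of_lt (min_le_left _ _) (by linarith)
  have ht2 : t < ε / (1 + frobNorm A) := lt_of_le_of_lt (min_le_right _ _) (by linarith)
  refine ⟨LinearMap.id + t • A, ?_, ?_, h t ht0 ht1⟩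
  · rw [add_sub_cancel_left, frobNorm_smul _ ht0.le]
    rw [lt_div_iff₀ (by positivity)] at ht2
    nlinarith
  · intro x hx
    apply (sq_le_sq₀ (norm_nonneg _) (norm_nonneg _)).1
    have : (LinearMap.id + t • A : Euc n →ₗ[ℝ] Euc n) x = x + t • A x := by simp
    rw [this, norm_add_sq_real, real_inner_smul_right, real_inner_comm]
    have := hS x hx
    have := sq_nonneg ‖t • A x‖
    have := mul_nonneg ht0.le (hS x hx)
    linarith

/-- Rank one map `w ↦ ⟪w, y⟫ z`, bilinear in `y, z`. -/
def rOne (n : ℕ) : Euc n →ₗ[ℝ] Euc n →ₗ[ℝ] (Euc n →ₗ[ℝ] Euc n) :=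
  LinearMap.mk₂ ℝ (fun y z => (innerₛₗ ℝ y).smulRight z)
    (by intros; ext1; simp [inner_add_left, add_smul])
    (by intros; ext1; simp [real_inner_smul_left, mul_smul])
    (by intros; ext1; simp)
    (by intro c y z; ext1 w; simp [smul_smul, mul_comm])

lemma rOne_apply {n : ℕ} (y z w : Euc n) : rOne n y z w = ⟪y, w⟫ • z := by
  simp [rOne]

lemma rOne_self {n : ℕ} (y : Euc n) : rOne n y y = projMap y := by
  ext1 w
  rw [rOne_apply]
  simp [projMap, real_inner_comm]

lemma projMap_isSymmetric {n : ℕ} (y : Euc n) : (projMap y).IsSymmetric := by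
  intro u v
  simp [projMap, real_inner_smul_left, real_inner_smul_right, real_inner_comm, mul_comm]

lemma sym_eq_sum {n : ℕ} (T : Euc n →ₗ[ℝ] Euc n) (hT : T.IsSymmetric) :
    ∃ (l : Fin n → ℝ) (v : Fin n → Euc n), T = ∑ i, l i • projMap (v i) := by
  have hn : Module.finrank ℝ (Euc n) = n := by simp
  set b := hT.eigenvectorBasis hn with hb
  refine ⟨hT.eigenvalues hn, b, ?_⟩
  apply b.toBasis.ext
  intro i
  have h1 : T (b i) = hT.eigenvalues hn i • b i := by
    exact hT.apply_eigenvectorBasis hn i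
  simp [h1, projMap, LinearMap.sum_apply, b.inner_eq_ite]

lemma id_eq_sum (n : ℕ) : (LinearMap.id : Euc n →ₗ[ℝ] Euc n)
    = ∑ i, projMap (EuclideanSpace.basisFun (Fin n) ℝ i) := by
  set b := EuclideanSpace.basisFun (Fin n) ℝ with hb
  apply b.toBasis.ext
  intro i
  simp [-EuclideanSpace.basisFun_apply, projMap, LinearMap.sum_apply, b.inner_eq_ite]

/-- From a functional to a symmetric direction. -/
lemma direction_of_functional {n : ℕ} (S : Finset (Euc n))
    (f : Module.Dual ℝ (Euc n →ₗ[ℝ] Euc n)) (hf : ∀ x ∈ S, 0 ≤ f (projMap x))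
    (hid : f LinearMap.id ≤ 0) (T0 : Euc n →ₗ[ℝ] Euc n) (hT0 : T0.IsSymmetric)
    (hfT : f T0 ≠ 0) :
    ∃ A : Euc n →ₗ[ℝ] Euc n, A.IsSymmetric ∧ A ≠ 0 ∧ LinearMap.trace ℝ _ A ≤ 0 ∧
      ∀ x ∈ S, 0 ≤ ⟪A x, x⟫ := by
  set b := EuclideanSpace.basisFun (Fin n) ℝ with hb
  let A : Euc n →ₗ[ℝ] Euc n :=
    ∑ i, ((f ∘ₗ (rOne n).flip (b i)) + (f ∘ₗ (rOne n) (b i))).smulRight (b i)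
  have hA : ∀ x z, ⟪A x, z⟫ = f (rOne n x z) + f (rOne n z x) := by
    intro x z
    have h1 : A x = ∑ i, (f (rOne n x (b i)) + f (rOne n (b i) x)) • b i := by
      simp [A, LinearMap.sum_apply]
    have h2 : ∀ g : Euc n →ₗ[ℝ] ℝ, ∑ i, g (b i) * ⟪b i, z⟫ = g z := by
      intro g
      conv_rhs => rw [← b.sum_repr' z, map_sum]
      simp [-EuclideanSpace.basisFun_apply, mul_comm]
    have h3 := h2 (f ∘ₗ rOne n x + f ∘ₗ (rOne n).flip x)
    rw [h1, sum_inner]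
    simp only [real_inner_smul_left]
    simpa using h3
  have hAx : ∀ x, ⟪A x, x⟫ = 2 * f (projMap x) := by
    intro x
    rw [hA, rOne_self]; ring
  refine ⟨A, ?_, ?_, ?_, ?_⟩
  · intro x y
    rw [hA, real_inner_comm, hA, add_comm]
  · intro h0
    obtain ⟨l, v, hT⟩ := sym_eq_sum T0 hT0
    apply hfT
    have hz : ∀ x, f (projMap x) = 0 := by
      intro x
      have := hAx x
      rw [h0] at this
      simp at this
      exact this
    rw [hT, map_sum]
    simp [hz]
  · rw [LinearMap.trace_eq_sum_inner A b]
    have : ∀ i, ⟪b i, A (b i)⟫ = 2 * f (projMap (b i)) := fun i => by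
      rw [real_inner_comm, hAx]
    rw [Finset.sum_congr rfl (fun i _ => this i), ← Finset.mul_sum, ← map_sum, ← id_eq_sum]
    linarith
  · intro x hx
    rw [hAx]
    have := hf x hx
    linarith

lemma functional_of_not_perfect {n : ℕ} (S : Finset (Euc n))
    (h : ¬ IsPerfectCfg (↑S : Set (Euc n))) :
    ∃ (f : Module.Dual ℝ (Euc n →ₗ[ℝ] Euc n)) (T0 : Euc n →ₗ[ℝ] Euc n),
      (∀ x ∈ S, 0 ≤ f (projMap x)) ∧ f LinearMap.id ≤ 0 ∧ T0.IsSymmetric ∧ f T0 ≠ 0 := by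
  unfold IsPerfectCfg at h
  push Not at h
  obtain ⟨T0, hT0, hmem⟩ := h
  obtain ⟨f, hf, hker⟩ := Submodule.exists_le_ker_of_notMem hmem
  have hz : ∀ x ∈ S, f (projMap x) = 0 := fun x hx =>
    hker (Submodule.subset_span ⟨x, hx, rfl⟩)
  rcases le_total (f LinearMap.id) 0 with h0 | h0
  · exact ⟨f, T0, fun x hx => (hz x hx).ge, h0, hT0, hf⟩
  · refine ⟨-f, T0, fun x hx => ?_, ?_, hT0, ?_⟩
    · simp [hz x hx]
    · simpa using h0
    · simpa using hf

lemma eutactic_of_pos {n : ℕ} (S : Finset (Euc n)) (hsym : ∀ x ∈ S, -x ∈ S)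
    (c : S → ℝ) (hc : ∀ x, 0 < c x)
    (h : ∑ x, c x • projMap (x : Euc n) = (LinearMap.id : Euc n →ₗ[ℝ] Euc n)) :
    IsEutacticCfg (↑S : Set (Euc n)) := by
  classical
  let d : Euc n → ℝ := fun x => if hx : x ∈ S then c ⟨x, hx⟩ else 0
  have hd : ∀ x ∈ S, 0 < d x := fun x hx => by simp [d, hx, hc]
  have hd0 : ∀ x ∉ S, d x = 0 := fun x hx => by simp [d, hx]
  have hsym' : ∀ x, x ∈ S ↔ -x ∈ S := fun x =>
    ⟨hsym x, fun h => by simpa using hsym _ h⟩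
  have hdsum : ∑ x ∈ S, d x • projMap x = (LinearMap.id : Euc n →ₗ[ℝ] Euc n) := by
    rw [← h, ← Finset.sum_coe_sort S]
    apply Finset.sum_congr rfl
    intro x _
    simp [d]
  have hpn : ∀ x : Euc n, projMap (-x) = projMap x := by
    intro x; ext1 y; simp [projMap]
  have hdsum' : ∑ x ∈ S, d (-x) • projMap x = (LinearMap.id : Euc n →ₗ[ℝ] Euc n) := by
    rw [← hdsum]
    refine Finset.sum_bij (fun x _ => -x) (fun x hx => hsym x hx) ?_ ?_ ?_
    · intro a _ b _ hab; simpa using hab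
    · intro b hb; exact ⟨-b, hsym b hb, by simp⟩
    · intro a _; simp [hpn]
  have hsupp : Function.support (fun x => (d x + d (-x)) / 2) ⊆ (S : Set (Euc n)) := by
    intro x hx
    by_contra hxS
    apply hx
    have h1 : x ∉ S := hxS
    have h2 : -x ∉ S := fun h => h1 ((hsym' x).2 h)
    simp [hd0 _ h1, hd0 _ h2]
  refine ⟨fun x => (d x + d (-x)) / 2, ?_, ?_, S.finite_toSet.subset hsupp, ?_, ?_⟩
  · intro x hx
    have := hd x hx
    have := hd (-x) (hsym x hx)
    positivity
  · intro x hx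
    by_contra h
    exact hx (hsupp h)
  · intro x; simp [add_comm]
  · rw [finsum_eq_sum_of_support_subset (s := S)]
    · have : ∀ x : Euc n, ((d x + d (-x)) / 2) • projMap x
          = (1 / 2 : ℝ) • (d x • projMap x + d (-x) • projMap x) := by
        intro x; module
      simp only [this]
      rw [← Finset.smul_sum, Finset.sum_add_distrib, hdsum, hdsum']
      module
    · intro x hx
      apply hsupp
      intro h0
      apply hx
      simp only at h0
      simp [h0]

lemma functional_of_not_eutactic {n : ℕ} (S : Finset (Euc n)) (hsym : ∀ x ∈ S, -x ∈ S)
    (hp : IsPerfectCfg (↑S : Set (Euc n))) (h : ¬ IsEutacticCfg (↑S : Set (Euc n))) :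
    ∃ (f : Module.Dual ℝ (Euc n →ₗ[ℝ] Euc n)) (T0 : Euc n →ₗ[ℝ] Euc n),
      (∀ x ∈ S, 0 ≤ f (projMap x)) ∧ f LinearMap.id ≤ 0 ∧ T0.IsSymmetric ∧ f T0 ≠ 0 := by
  classical
  let L : (S → ℝ) →ₗ[ℝ] (Euc n →ₗ[ℝ] Euc n) :=
    Fintype.linearCombination ℝ (fun x : S => projMap (x : Euc n))
  have hL : ∀ c, L c = ∑ x, c x • projMap (x : Euc n) := fun c => by
    simp [L, Fintype.linearCombination_apply]
  have hLsym : ∀ c, (L c).IsSymmetric := by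
    intro c u v
    rw [hL]
    simp only [LinearMap.sum_apply, LinearMap.smul_apply, sum_inner, inner_sum,
      real_inner_smul_left, real_inner_smul_right]
    exact Finset.sum_congr rfl fun x _ => by rw [projMap_isSymmetric]
  obtain ⟨c, hc⟩ : ∃ c, L c = LinearMap.id := by
    have h1 := hp LinearMap.id (fun _ _ => rfl)
    have h2 : projMap '' (↑S : Set (Euc n)) = Set.range (fun x : S => projMap (x : Euc n)) := by
      ext; simp
    rw [h2, ← Fintype.range_linearCombination] at h1
    exact h1
  let P : Set (S → ℝ) := Set.pi Set.univ (fun _ => Set.Ioi (0 : ℝ))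
  have hPo : IsOpen P := isOpen_set_pi Set.finite_univ (fun _ _ => isOpen_Ioi)
  have hPc : Convex ℝ P := convex_pi (fun _ _ => convex_Ioi 0)
  let Q : Set (S → ℝ) := {v | L v = LinearMap.id}
  have hQc : Convex ℝ Q := (convex_singleton (LinearMap.id : Euc n →ₗ[ℝ] Euc n)).linear_preimage L
  have hdisj : Disjoint P Q := by
    rw [Set.disjoint_left]
    intro v hv hq
    apply h
    refine eutactic_of_pos S hsym v (fun x => hv x (Set.mem_univ _)) ?_
    rw [← hL]; exact hq
  obtain ⟨f, u, hfP, hfQ⟩ := geometric_hahn_banach_open hPc hPo hQc hdisj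
  have hone : (1 : S → ℝ) ∈ P := fun _ _ => by simp
  have hcone : ∀ v ∈ P, f v ≤ 0 := by
    intro v hv
    by_contra! hpos
    have hs : ∀ r : ℝ, 0 < r → r * f v < u := by
      intro r hr
      have := hfP (r • v) (fun x hx => mul_pos hr (hv x hx))
      simpa using this
    have hu : 0 < u := by have := hs 1 one_pos; linarith
    have := hs (u / f v) (by positivity)
    rw [div_mul_cancel₀ _ hpos.ne'] at this
    exact lt_irrefl _ this
  have hu : 0 ≤ u := by
    by_contra! hu
    have h1 := hcone 1 hone
    have hs : ∀ r : ℝ, 0 < r → r * f 1 < u := by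
      intro r hr
      have := hfP (r • 1) (fun x hx => mul_pos hr (hone x hx))
      simpa using this
    have h2 : f 1 < 0 := by have := hs 1 one_pos; linarith
    have := hs (u / f 1) (div_pos_of_neg_of_neg hu h2)
    rw [div_mul_cancel₀ _ h2.ne] at this
    exact lt_irrefl _ this
  have hclosed : ∀ v : S → ℝ, (∀ x, 0 ≤ v x) → f v ≤ 0 := by
    intro v hv
    by_contra! hpos
    have hs : ∀ r : ℝ, 0 < r → f v + r * f 1 ≤ 0 := by
      intro r hr
      have := hcone (v + r • 1) (fun x _ => by
        have := hv x
        simp; linarith)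
      simpa using this
    have h1 := hcone 1 hone
    have := hs (f v / (2 * (1 - f 1))) (by
      have : 0 < 1 - f 1 := by linarith
      positivity)
    have h3 : f v / (2 * (1 - f 1)) * (1 - f 1) = f v / 2 := by
      have : 1 - f 1 ≠ 0 := by linarith
      field_simp
    have h4 : 0 < f v / (2 * (1 - f 1)) := by
      have : 0 < 1 - f 1 := by linarith
      positivity
    nlinarith
  have hker : ∀ v, L v = 0 → f v = 0 := by
    intro v hv
    have hs : ∀ r : ℝ, u ≤ f c + r * f v := by
      intro r
      have := hfQ (c + r • v) (by simp [Q, hc, hv])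
      simpa using this
    by_contra hne
    have := hs ((u - 1 - f c) / f v)
    rw [div_mul_cancel₀ _ hne] at this
    linarith
  obtain ⟨g, hg⟩ : ∃ g : Module.Dual ℝ (Euc n →ₗ[ℝ] Euc n), ∀ v, g (L v) = f v := by
    have h1 : (f : (S → ℝ) →ₗ[ℝ] ℝ) ∈ LinearMap.range L.dualMap := by
      rw [LinearMap.range_dualMap_eq_dualAnnihilator_ker, Submodule.mem_dualAnnihilator]
      intro w hw
      exact hker w hw
    obtain ⟨g, hg⟩ := h1
    exact ⟨g, fun v => by
      have := congrArg (fun k => k v) hg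
      simpa using this⟩
  refine ⟨-g, L (c - 1), ?_, ?_, hLsym _, ?_⟩
  · intro x hx
    have h1 : L (Pi.single ⟨x, hx⟩ 1) = projMap x := by
      simp [L]
    have h2 := hclosed (Pi.single ⟨x, hx⟩ 1) (fun y => by
      by_cases hy : y = ⟨x, hx⟩
      · subst hy; simp
      · simp [Pi.single_eq_of_ne hy])
    rw [← hg, h1] at h2
    simpa using h2
  · rw [← hc, LinearMap.neg_apply, hg]
    have := hfQ c hc
    linarith
  · rw [LinearMap.neg_apply, hg, map_sub]
    have := hfQ c hc
    have := hfP 1 hone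
    intro h0
    linarith

/-- Theorem 3.2(ii): if `S` is not extreme, then for every `ε > 0` there
is a linear map `T` with `‖T - Id‖ < ε`, `‖Tx‖ ≥ ‖x‖` for all `x ∈ S`, and `det T < 1`. -/
theorem not_extreme_exists_det_lt_one (n : ℕ) (hn : 2 ≤ n) (S : Finset (Euc n))
    (hunit : ∀ x ∈ S, ‖x‖ = 1) (hsym : ∀ x ∈ S, -x ∈ S)
    (hnotextreme : ¬ IsExtremeCfg (↑S : Set (Euc n))) :
    ∀ ε > (0 : ℝ), ∃ T : Euc n →ₗ[ℝ] Euc n,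
      frobNorm (T - LinearMap.id) < ε ∧
      (∀ x ∈ S, ‖x‖ ≤ ‖T x‖) ∧
      LinearMap.det T < 1 := by
  intro ε hε
  obtain ⟨f, T0, h1, h2, h3, h4⟩ :
      ∃ (f : Module.Dual ℝ (Euc n →ₗ[ℝ] Euc n)) (T0 : Euc n →ₗ[ℝ] Euc n),
      (∀ x ∈ S, 0 ≤ f (projMap x)) ∧ f LinearMap.id ≤ 0 ∧ T0.IsSymmetric ∧ f T0 ≠ 0 := by
    by_cases hp : IsPerfectCfg (↑S : Set (Euc n))
    · exact functional_of_not_eutactic S hsym hp (fun he => hnotextreme ⟨hp, he⟩)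
    · exact functional_of_not_perfect S hp
  obtain ⟨A, hA, hA0, htr, hS⟩ := direction_of_functional S f h1 h2 T0 h3 h4
  exact exists_of_direction S A hA hA0 htr hS ε hε

end
end

section
/- Let n ≥ 2 and let S be a finite set of unit vectors in ℝ^n with S = −S which is minimally extreme with eutaxy coefficients υ_x (x ∈ S). Let ω_x (x ∈ S) be real numbers with ω_x = ω_{−x}, and let ω_0 ∈ ℝ. Then there exists a symmetric linear map Q : ℝ^n → ℝ^n with ⟨x, Qx⟩ = ω_x for all x ∈ S and trace Q = ω_0 if and only if ω_0 = Σ_{x∈S} υ_x ω_x. -/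
open scoped RealInnerProductSpace
open Metric MeasureTheory

noncomputable section

lemma aux_trace {n : ℕ} (Q : Euc n →ₗ[ℝ] Euc n) (x : Euc n) :
    LinearMap.trace ℝ (Euc n) (Q ∘ₗ projMap x) = ⟪x, Q x⟫ := by
  have h : Q ∘ₗ projMap x = (innerₗ (Euc n) x).smulRight (Q x) := by
    ext y
    simp [projMap, real_inner_comm]
  rw [h, LinearMap.trace_smulRight]
  simp

lemma aux_symm {n : ℕ} (x : Euc n) : (projMap x).IsSymmetric := by
  intro y z
  simp [projMap, real_inner_smul_left, real_inner_smul_right, real_inner_comm, mul_comm]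

lemma aux_inj {n : ℕ} (S : Finset (Euc n)) (hperfect : IsPerfectCfg (↑S : Set (Euc n)))
    (Q : Euc n →ₗ[ℝ] Euc n) (hQ : Q.IsSymmetric) (h0 : ∀ x ∈ S, ⟪x, Q x⟫ = 0) : Q = 0 := by
  apply hQ.inner_map_self_eq_zero.1
  intro y
  have hy := hperfect (projMap y) (aux_symm y)
  have : ∀ T ∈ Submodule.span ℝ (projMap '' (S : Set (Euc n))),
      LinearMap.trace ℝ (Euc n) (Q ∘ₗ T) = 0 := by
    intro T hT
    induction hT using Submodule.span_induction with
    | mem T hT =>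
      obtain ⟨x, hx, rfl⟩ := hT
      rw [aux_trace]; exact h0 x hx
    | zero => simp
    | add a b _ _ ha hb => rw [LinearMap.comp_add, map_add, ha, hb, add_zero]
    | smul c a _ ha => rw [LinearMap.comp_smul, map_smul, ha, smul_zero]
  have h := this _ hy
  rw [aux_trace, real_inner_comm] at h
  exact h

/-- the symmetric map attached to a function on unordered pairs -/
def symOf (n : ℕ) : (Sym2 (Fin n) → ℝ) →ₗ[ℝ] (Euc n →ₗ[ℝ] Euc n) where
  toFun f := Matrix.toEuclideanLin (Matrix.of fun i j => f s(i, j))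
  map_add' f g := by rw [← map_add]; rfl
  map_smul' c f := by rw [RingHom.id_apply, ← map_smul]; rfl

lemma symOf_symm {n : ℕ} (f : Sym2 (Fin n) → ℝ) : (symOf n f).IsSymmetric := by
  apply Matrix.isSymmetric_toEuclideanLin_iff.2
  ext i j
  simp [Sym2.eq_swap]

lemma symOf_inj {n : ℕ} (f : Sym2 (Fin n) → ℝ) (h : symOf n f = 0) : f = 0 := by
  have h1 : (Matrix.of fun i j => f s(i, j)) = (0 : Matrix (Fin n) (Fin n) ℝ) := by
    apply Matrix.toEuclideanLin.injective
    rw [map_zero]; exact h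
  funext p
  induction p with
  | _ i j => exact congrFun (congrFun h1 i) j

/-- a representative of the pair `x, -x` -/
def rep {n : ℕ} (x : Euc n) : Euc n := (Quot.out s(x, -x)).1

lemma rep_eq {n : ℕ} (x : Euc n) : rep x = x ∨ rep x = -x := by
  have := Sym2.out_fst_mem s(x, -x)
  simpa [rep] using this

lemma rep_neg {n : ℕ} (x : Euc n) : rep (-x) = rep x := by
  unfold rep
  rw [neg_neg, Sym2.eq_swap]

lemma rep_rep {n : ℕ} (x : Euc n) : rep (rep x) = rep x := by
  rcases rep_eq x with h | h <;> rw [h] 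
  · exact h
  · rw [rep_neg, h]

open Classical in
lemma card_rep {n : ℕ} (S : Finset (Euc n))
    (hunit : ∀ x ∈ S, ‖x‖ = 1) (hsym : ∀ x ∈ S, -x ∈ S) :
    (S.image rep).card * 2 ≤ S.card := by
  rw [Finset.card_eq_sum_card_image rep S, ← smul_eq_mul]
  apply Finset.card_nsmul_le_sum
  intro h hh
  obtain ⟨x, hx, rfl⟩ := Finset.mem_image.1 hh
  have hne : x ≠ -x := by
    intro e
    have : x = 0 := by
      have h2 : (2 : ℝ) • x = 0 := by rw [two_smul]; nth_rewrite 2 [e]; exact add_neg_cancel x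
      simpa using h2
    have h1 := hunit x hx
    rw [this] at h1
    simp at h1
  rw [← Finset.card_pair hne]
  apply Finset.card_le_card
  intro y hy
  rw [Finset.mem_insert, Finset.mem_singleton] at hy
  rcases hy with rfl | rfl
  · simp [hx]
  · simp [hsym x hx, rep_neg]

open Classical in
lemma aux_exists {n : ℕ} (S : Finset (Euc n))
    (hunit : ∀ x ∈ S, ‖x‖ = 1) (hsym : ∀ x ∈ S, -x ∈ S)
    (hcard : S.card = n * (n + 1)) (hperfect : IsPerfectCfg (↑S : Set (Euc n)))
    (ω : Euc n → ℝ) (hω : ∀ x ∈ S, ω x = ω (-x)) :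
    ∃ Q : Euc n →ₗ[ℝ] Euc n, Q.IsSymmetric ∧ (∀ x ∈ S, ⟪x, Q x⟫ = ω x) := by
  let Φ : (Sym2 (Fin n) → ℝ) →ₗ[ℝ] ({y // y ∈ S.image rep} → ℝ) :=
    { toFun := fun f h => ⟪(h : Euc n), symOf n f h⟫
      map_add' := fun f g => by ext h; simp [inner_add_right]
      map_smul' := fun c f => by ext h; simp [real_inner_smul_right] }
  have key : ∀ (Q : Euc n →ₗ[ℝ] Euc n) x, ⟪rep x, Q (rep x)⟫ = ⟪x, Q x⟫ := by
    intro Q x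
    rcases rep_eq x with h | h <;> rw [h]
    simp
  have hinj : Function.Injective Φ := by
    rw [injective_iff_map_eq_zero]
    intro f hf
    apply symOf_inj
    apply aux_inj S hperfect _ (symOf_symm f)
    intro x hx
    rw [← key]
    exact congrFun hf ⟨rep x, Finset.mem_image_of_mem _ hx⟩
  have hdim : Module.finrank ℝ (Sym2 (Fin n) → ℝ) =
      Module.finrank ℝ ({y // y ∈ S.image rep} → ℝ) := by
    apply le_antisymm (LinearMap.finrank_le_finrank_of_injective hinj)
    rw [Module.finrank_fintype_fun_eq_card, Module.finrank_fintype_fun_eq_card, Sym2.card,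
      Fintype.card_coe, Fintype.card_fin, Nat.choose_two_right, Nat.le_div_iff_mul_le two_pos]
    have := card_rep S hunit hsym
    rw [hcard, mul_comm n] at this
    exact this
  obtain ⟨f, hf⟩ := (LinearMap.injective_iff_surjective_of_finrank_eq_finrank hdim).1 hinj
    (fun h => ω h)
  refine ⟨symOf n f, symOf_symm f, fun x hx => ?_⟩
  rw [← key]
  have h1 : ⟪rep x, symOf n f (rep x)⟫ = ω (rep x) :=
    congrFun hf ⟨rep x, Finset.mem_image_of_mem _ hx⟩
  rw [h1]
  rcases rep_eq x with h | h <;> rw [h]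
  exact (hω x hx).symm

/-- Theorem 3.2(iv): if `S` is minimally extreme with eutaxy coefficients
`υ`, and `ω : S → ℝ` is even, then a symmetric map `Q` with `⟪x, Qx⟫ = ω x` on `S` and
`trace Q = ω₀` exists iff `ω₀ = Σ_{x∈S} υ_x ω_x`. -/
theorem minimally_extreme_symmetric_map_exists (n : ℕ) (hn : 2 ≤ n) (S : Finset (Euc n))
    (hunit : ∀ x ∈ S, ‖x‖ = 1) (hsym : ∀ x ∈ S, -x ∈ S)
    (hcard : S.card = n * (n + 1)) (hperfect : IsPerfectCfg (↑S : Set (Euc n)))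
    (υ : Euc n → ℝ) (hpos : ∀ x ∈ S, 0 < υ x) (hυsym : ∀ x ∈ S, υ x = υ (-x))
    (heutaxy : ∑ x ∈ S, υ x • projMap x = (LinearMap.id : Euc n →ₗ[ℝ] Euc n))
    (ω : Euc n → ℝ) (hω : ∀ x ∈ S, ω x = ω (-x)) (ω₀ : ℝ) :
    (∃ Q : Euc n →ₗ[ℝ] Euc n, Q.IsSymmetric ∧ (∀ x ∈ S, ⟪x, Q x⟫ = ω x) ∧
        LinearMap.trace ℝ (Euc n) Q = ω₀) ↔
      ω₀ = ∑ x ∈ S, υ x * ω x := by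
  have htr : ∀ Q : Euc n →ₗ[ℝ] Euc n, (∀ x ∈ S, ⟪x, Q x⟫ = ω x) →
      LinearMap.trace ℝ (Euc n) Q = ∑ x ∈ S, υ x * ω x := by
    intro Q hQ
    calc LinearMap.trace ℝ (Euc n) Q
        = LinearMap.trace ℝ (Euc n) (Q ∘ₗ ∑ x ∈ S, υ x • projMap x) := by
          rw [heutaxy, LinearMap.comp_id]
      _ = ∑ x ∈ S, υ x * ω x := by
          have hc : Q ∘ₗ ∑ x ∈ S, υ x • projMap x = ∑ x ∈ S, Q ∘ₗ (υ x • projMap x) := by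
            ext y; simp
          rw [hc, map_sum]
          refine Finset.sum_congr rfl fun x hx => ?_
          rw [LinearMap.comp_smul, map_smul, aux_trace, hQ x hx, smul_eq_mul]
  constructor
  · rintro ⟨Q, -, hQ, rfl⟩
    exact htr Q hQ
  · rintro rfl
    obtain ⟨Q, hs, hQ⟩ := aux_exists S hunit hsym hcard hperfect ω hω
    exact ⟨Q, hs, hQ, htr Q hQ⟩

end
end

section
/- For each n ≥ 2 there exist ε > 0 and C > 0 such that every n-dimensional lattice Λ admissible for the unit ball B^n with d(Λ) − d_{B^n} < ε admits a critical lattice Λ' of B^n with δ(Λ, Λ') ≤ C (d(Λ) − d_{B^n}). -/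
open scoped RealInnerProductSpace
open Metric MeasureTheory

noncomputable section

section Aux
attribute [local instance] Matrix.frobeniusNormedAddCommGroup Matrix.frobeniusNormedSpace
  Matrix.frobeniusNormedRing
open Matrix Filter Topology

lemma aux_frob_sq {ι : Type*} [Fintype ι] (A : Matrix ι ι ℝ) : ‖A‖ ^ 2 = ∑ i, ∑ j, A i j ^ 2 := by
  rw [Matrix.frobenius_norm_def, ← Real.sqrt_eq_rpow, Real.sq_sqrt]
  · simp
  · positivity

lemma aux_frob_trace {n : ℕ} (A : Matrix (Fin n) (Fin n) ℝ) : ‖A‖ ^ 2 = (Aᵀ * A).trace := by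
  rw [aux_frob_sq, Finset.sum_comm]
  simp [Matrix.trace, Matrix.mul_apply, pow_two]

lemma aux_spec {n : ℕ} (X : Matrix (Fin n) (Fin n) ℝ) (hX : Xᵀ = X) :
    ∃ (Q : Matrix (Fin n) (Fin n) ℝ) (l : Fin n → ℝ), Qᵀ * Q = 1 ∧ Q * Qᵀ = 1 ∧
      X = Q * diagonal l * Qᵀ := by
  have hH : X.IsHermitian := by
    rw [Matrix.IsHermitian, Matrix.conjTranspose_eq_transpose_of_trivial, hX]
  refine ⟨hH.eigenvectorUnitary, hH.eigenvalues, ?_, ?_, ?_⟩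
  · have := Unitary.coe_star_mul_self hH.eigenvectorUnitary
    simpa [Matrix.star_eq_conjTranspose] using this
  · have := Unitary.coe_mul_star_self hH.eigenvectorUnitary
    simpa [Matrix.star_eq_conjTranspose] using this
  · have := hH.spectral_theorem
    rw [Unitary.conjStarAlgAut_apply] at this
    simpa [Matrix.star_eq_conjTranspose, Function.comp_def] using this

lemma aux_norm_conj {n : ℕ} (Q : Matrix (Fin n) (Fin n) ℝ) (l : Fin n → ℝ) (hQ : Qᵀ * Q = 1) :
    ‖Q * diagonal l * Qᵀ‖ ^ 2 = ∑ i, l i ^ 2 := by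
  rw [aux_frob_trace]
  have : (Q * diagonal l * Qᵀ)ᵀ * (Q * diagonal l * Qᵀ) =
      Q * (diagonal l * diagonal l * Qᵀ) := by
    simp only [Matrix.transpose_mul, Matrix.transpose_transpose, Matrix.diagonal_transpose]
    calc _ = Q * (diagonal l * (Qᵀ * Q) * diagonal l * Qᵀ) := by simp only [Matrix.mul_assoc]
      _ = _ := by rw [hQ, Matrix.mul_one]
  rw [this, Matrix.trace_mul_comm, Matrix.mul_assoc, hQ, Matrix.mul_one, Matrix.diagonal_mul_diagonal,
    Matrix.trace_diagonal]
  simp [pow_two]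

lemma aux_log {h : ℝ} (hh : |h| ≤ 1 / 4) :
    h - h ^ 2 ≤ Real.log (1 + h) ∧ Real.log (1 + h) ≤ h - h ^ 2 / 6 := by
  have h1 : |(-h)| < 1 := by rw [abs_neg]; linarith
  have := Real.abs_log_sub_add_sum_range_le h1 2
  rw [abs_neg] at this
  have h3 : |h| ^ (2 + 1) / (1 - |h|) ≤ h ^ 2 / 3 := by
    rw [div_le_iff₀ (by linarith), ← sq_abs h]
    nlinarith [sq_nonneg |h|, abs_nonneg h]
  have h4 := abs_le.1 (this.trans h3)
  simp [Finset.sum_range_succ] at h4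
  constructor <;> nlinarith [h4.1, h4.2, sq_nonneg h]

lemma aux_sqrt {n : ℕ} (X : Matrix (Fin n) (Fin n) ℝ) (hX : Xᵀ = X) (hs : ‖X‖ ≤ 1 / 4) :
    ∃ S : Matrix (Fin n) (Fin n) ℝ, Sᵀ = S ∧ S * S = 1 + X ∧ ‖S - 1‖ ≤ ‖X‖ ∧ 0 < (1 + X).det ∧
      X.trace - ‖X‖ ^ 2 ≤ Real.log (1 + X).det ∧
      Real.log (1 + X).det ≤ X.trace - ‖X‖ ^ 2 / 6 := by
  obtain ⟨Q, l, h1, h2, h3⟩ := aux_spec X hX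
  have hn : ‖X‖ ^ 2 = ∑ i, l i ^ 2 := by rw [h3, aux_norm_conj Q l h1]
  have hl : ∀ i, |l i| ≤ 1 / 4 := by
    intro i
    refine le_trans ?_ hs
    apply abs_le_of_sq_le_sq _ (norm_nonneg _)|> fun h => h
    rw [hn]
    exact Finset.single_le_sum (f := fun i => l i ^ 2) (fun i _ => sq_nonneg _) (Finset.mem_univ i)
  have hpos : ∀ i, 0 < 1 + l i := fun i => by have := abs_le.1 (hl i); linarith [this.1]
  have hX1 : 1 + X = Q * diagonal (fun i => 1 + l i) * Qᵀ := by
    have : diagonal (fun i => 1 + l i) = 1 + diagonal l := by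
      rw [← Matrix.diagonal_one, Matrix.diagonal_add]
    rw [this, Matrix.mul_add, Matrix.add_mul, Matrix.mul_one, h2, ← h3]
  have hdet : (1 + X).det = ∏ i, (1 + l i) := by
    rw [hX1, Matrix.det_mul_comm, ← Matrix.mul_assoc, h1, Matrix.one_mul, Matrix.det_diagonal]
  have htr : X.trace = ∑ i, l i := by
    rw [h3, Matrix.trace_mul_comm, ← Matrix.mul_assoc, h1, Matrix.one_mul, Matrix.trace_diagonal]
  have hlog : Real.log (1 + X).det = ∑ i, Real.log (1 + l i) := by
    rw [hdet, Real.log_prod]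
    intro i _; exact (hpos i).ne'
  refine ⟨Q * diagonal (fun i => √(1 + l i)) * Qᵀ, ?_, ?_, ?_, ?_, ?_, ?_⟩
  · simp [Matrix.mul_assoc]
  · rw [hX1]
    calc _ = Q * (diagonal (fun i => √(1 + l i)) * (Qᵀ * Q) * diagonal (fun i => √(1 + l i)) * Qᵀ) := by
          simp only [Matrix.mul_assoc]
      _ = _ := by
          rw [h1, Matrix.mul_one, Matrix.diagonal_mul_diagonal, Matrix.mul_assoc]
          simp only [fun i => Real.mul_self_sqrt (hpos i).le]
  · have : Q * diagonal (fun i => √(1 + l i)) * Qᵀ - 1 =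
        Q * diagonal (fun i => √(1 + l i) - 1) * Qᵀ := by
      have : diagonal (fun i => √(1 + l i) - 1) = diagonal (fun i => √(1 + l i)) - 1 := by
        rw [← Matrix.diagonal_one, Matrix.diagonal_sub]
      rw [this, Matrix.mul_sub, Matrix.sub_mul, Matrix.mul_one, h2]
    rw [this]
    apply le_of_sq_le_sq _ (norm_nonneg _)
    rw [aux_norm_conj _ _ h1, hn]
    apply Finset.sum_le_sum
    intro i _
    have e := Real.sq_sqrt (hpos i).le
    have e2 := Real.sqrt_nonneg (1 + l i)
    have : l i = (√(1 + l i) - 1) * (√(1 + l i) + 1) := by linarith [e, e2]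
    set s := √(1 + l i)
    rw [this, mul_pow]
    nlinarith [sq_nonneg (s - 1), mul_nonneg (sq_nonneg (s - 1)) e2, mul_nonneg (sq_nonneg (s - 1)) (sq_nonneg s)]
  · rw [hdet]; exact Finset.prod_pos fun i _ => hpos i
  · rw [hlog, htr, hn, ← Finset.sum_sub_distrib]
    exact Finset.sum_le_sum fun i _ => (aux_log (hl i)).1
  · rw [hlog, htr, hn, Finset.sum_div, ← Finset.sum_sub_distrib]
    exact Finset.sum_le_sum fun i _ => (aux_log (hl i)).2

/-- integer vector as a real vector -/
def auxZ {n : ℕ} (z : Fin n → ℤ) : Fin n → ℝ := fun i => (z i : ℝ)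

def auxAdm {n : ℕ} (M : Matrix (Fin n) (Fin n) ℝ) : Prop :=
  ∀ z : Fin n → ℤ, z ≠ 0 → 1 ≤ (M *ᵥ auxZ z) ⬝ᵥ (M *ᵥ auxZ z)

lemma aux_quad {ι : Type*} [Fintype ι] (X : Matrix ι ι ℝ) (y : ι → ℝ) :
    |y ⬝ᵥ X *ᵥ y| ≤ ‖X‖ * (y ⬝ᵥ y) := by
  have hy : 0 ≤ y ⬝ᵥ y := by
    simp only [dotProduct]; exact Finset.sum_nonneg fun i _ => mul_self_nonneg _
  apply abs_le_of_sq_le_sq _ (by positivity)|> fun h => h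
  have e1 : y ⬝ᵥ X *ᵥ y = ∑ p : ι × ι, X p.1 p.2 * (y p.1 * y p.2) := by
    rw [Fintype.sum_prod_type]
    simp only [dotProduct, Matrix.mulVec, Finset.mul_sum]
    refine Finset.sum_congr rfl fun i _ => Finset.sum_congr rfl fun j _ => by ring
  have e2 : (‖X‖ * (y ⬝ᵥ y)) ^ 2 = (∑ p : ι × ι, X p.1 p.2 ^ 2) *
      (∑ p : ι × ι, (y p.1 * y p.2) ^ 2) := by
    rw [Fintype.sum_prod_type, Fintype.sum_prod_type, mul_pow, aux_frob_sq]
    congr 1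
    simp only [dotProduct, pow_two (∑ i, y i * y i), Finset.sum_mul_sum]
    refine Finset.sum_congr rfl fun i _ => Finset.sum_congr rfl fun j _ => by ring
  rw [e1, e2]
  exact Finset.sum_mul_sq_le_sq_mul_sq _ _ _

lemma aux_dot_mulVec {ι : Type*} [Fintype ι] (A : Matrix ι ι ℝ) (x : ι → ℝ) :
    (A *ᵥ x) ⬝ᵥ (A *ᵥ x) = x ⬝ᵥ ((Aᵀ * A) *ᵥ x) := by
  rw [← Matrix.mulVec_mulVec, Matrix.dotProduct_mulVec x, Matrix.vecMul_transpose]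

lemma aux_finite {n : ℕ} (M : Matrix (Fin n) (Fin n) ℝ) (h : M.det ≠ 0) (c : ℝ) :
    {z : Fin n → ℤ | (M *ᵥ auxZ z) ⬝ᵥ (M *ᵥ auxZ z) ≤ c}.Finite := by
  have hu : IsUnit M.det := isUnit_iff_ne_zero.2 h
  have key : ∀ z : Fin n → ℤ, (M *ᵥ auxZ z) ⬝ᵥ (M *ᵥ auxZ z) ≤ c → ∀ i,
      |z i| ≤ ⌈‖(M⁻¹)ᵀ * M⁻¹‖ * c + 1⌉ := by
    intro z hz i
    have h1 : M⁻¹ *ᵥ (M *ᵥ auxZ z) = auxZ z := by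
      rw [Matrix.mulVec_mulVec, Matrix.nonsing_inv_mul _ hu, Matrix.one_mulVec]
    have h2 := aux_dot_mulVec M⁻¹ (M *ᵥ auxZ z)
    rw [h1] at h2
    have h3 := (abs_le.1 (aux_quad ((M⁻¹)ᵀ * M⁻¹) (M *ᵥ auxZ z))).2
    rw [← h2] at h3
    have h4 : (z i : ℝ) * z i ≤ auxZ z ⬝ᵥ auxZ z :=
      Finset.single_le_sum (f := fun i => auxZ z i * auxZ z i) (fun i _ => mul_self_nonneg _)
        (Finset.mem_univ i)
    have h5 : ‖(M⁻¹)ᵀ * M⁻¹‖ * ((M *ᵥ auxZ z) ⬝ᵥ (M *ᵥ auxZ z)) ≤ ‖(M⁻¹)ᵀ * M⁻¹‖ * c :=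
      mul_le_mul_of_nonneg_left hz (norm_nonneg _)
    have h6 : ((|z i| : ℤ) : ℝ) ≤ ‖(M⁻¹)ᵀ * M⁻¹‖ * c + 1 := by
      push_cast
      nlinarith [abs_mul_abs_self (z i : ℝ), sq_nonneg (|(z i : ℝ)| - 1)]
    exact_mod_cast h6.trans (Int.le_ceil _)
  refine Set.Finite.subset (Set.finite_Icc (fun _ => -⌈‖(M⁻¹)ᵀ * M⁻¹‖ * c + 1⌉)
    (fun _ => ⌈‖(M⁻¹)ᵀ * M⁻¹‖ * c + 1⌉)) ?_
  intro z hz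
  exact ⟨fun i => (abs_le.1 (key z hz i)).1, fun i => (abs_le.1 (key z hz i)).2⟩

lemma aux_gap {n : ℕ} (M : Matrix (Fin n) (Fin n) ℝ) (h : M.det ≠ 0) (hA : auxAdm M) :
    ∃ η > 0, η ≤ 1 ∧ ∀ z : Fin n → ℤ, z ≠ 0 → (M *ᵥ auxZ z) ⬝ᵥ (M *ᵥ auxZ z) = 1 ∨
      1 + η ≤ (M *ᵥ auxZ z) ⬝ᵥ (M *ᵥ auxZ z) := by
  have hf := aux_finite M h 2
  have hf2 : {z : Fin n → ℤ | (M *ᵥ auxZ z) ⬝ᵥ (M *ᵥ auxZ z) ≤ 2 ∧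
     1 < (M *ᵥ auxZ z) ⬝ᵥ (M *ᵥ auxZ z)}.Finite := hf.subset fun z hz => hz.1
  obtain ⟨δ, hδ, hδ2⟩ : ∃ δ > 0, ∀ z ∈ {z : Fin n → ℤ | (M *ᵥ auxZ z) ⬝ᵥ (M *ᵥ auxZ z) ≤ 2 ∧
     1 < (M *ᵥ auxZ z) ⬝ᵥ (M *ᵥ auxZ z)}, δ ≤ (M *ᵥ auxZ z) ⬝ᵥ (M *ᵥ auxZ z) - 1 := by
    rcases Set.eq_empty_or_nonempty {z : Fin n → ℤ | (M *ᵥ auxZ z) ⬝ᵥ (M *ᵥ auxZ z) ≤ 2 ∧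
     1 < (M *ᵥ auxZ z) ⬝ᵥ (M *ᵥ auxZ z)} with he | hne
    · exact ⟨1, one_pos, by rw [he]; simp⟩
    · obtain ⟨z0, hz0, hm⟩ := Set.exists_min_image _
        (fun z => (M *ᵥ auxZ z) ⬝ᵥ (M *ᵥ auxZ z) - 1) hf2 hne
      exact ⟨_, sub_pos.2 hz0.2, hm⟩
  refine ⟨min δ 1, lt_min hδ one_pos, min_le_right _ _, fun z hz => ?_⟩
  rcases (hA z hz).eq_or_lt with h1 | h1
  · exact Or.inl h1.symm
  · right
    by_cases h2 : (M *ᵥ auxZ z) ⬝ᵥ (M *ᵥ auxZ z) ≤ 2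
    · linarith [hδ2 z ⟨h2, h1⟩, min_le_left δ 1]
    · linarith [min_le_right δ 1]

set_option maxHeartbeats 1000000 in
lemma aux_local {n : ℕ} (M0 : Matrix (Fin n) (Fin n) ℝ) (h0 : M0.det ≠ 0) (hA : auxAdm M0)
    (hmin : ∀ M : Matrix (Fin n) (Fin n) ℝ, M.det ≠ 0 → auxAdm M → |M0.det| ≤ |M.det|) :
    ∃ C > 0, ∀ᶠ M in 𝓝 M0, auxAdm M → ∃ M' : Matrix (Fin n) (Fin n) ℝ, auxAdm M' ∧
      |M'.det| = |M0.det| ∧ ‖M - M'‖ ≤ C * (|M.det| - |M0.det|) := by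
  have hu : IsUnit M0.det := isUnit_iff_ne_zero.2 h0
  have hD : 0 < |M0.det| := abs_pos.2 h0
  obtain ⟨η, hη, hη1, hgap⟩ := aux_gap M0 h0 hA
  set r := η / 4 with hr
  have hr0 : 0 < r := by positivity
  refine ⟨24 / (r * |M0.det|) * ‖M0‖ + 1, by positivity, ?_⟩
  have hcont : Continuous fun M : Matrix (Fin n) (Fin n) ℝ =>
      ‖(M * M0⁻¹)ᵀ * (M * M0⁻¹) - 1‖ := by
    apply Continuous.norm
    fun_prop
  have hev : ∀ᶠ M in 𝓝 M0, ‖(M * M0⁻¹)ᵀ * (M * M0⁻¹) - 1‖ < r / 12 := by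
    apply hcont.continuousAt.eventually_lt continuousAt_const
    rw [Matrix.mul_nonsing_inv _ hu]
    simp; positivity
  filter_upwards [hev] with M hM hMA
  set N := M * M0⁻¹ with hN
  set X := Nᵀ * N - 1 with hX
  have hNM : M = N * M0 := by
    rw [hN, Matrix.mul_assoc, Matrix.nonsing_inv_mul _ hu, Matrix.mul_one]
  have hXt : Xᵀ = X := by simp [hX]
  have hX1 : 1 + X = Nᵀ * N := by simp [hX]
  obtain ⟨S, hS1, hS2, hS3, hS4, hS5, hS6⟩ := aux_sqrt X hXt (by linarith)
  have hdX : (1 + X).det = N.det ^ 2 := by rw [hX1, Matrix.det_mul, Matrix.det_transpose, pow_two]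
  have hNd : N.det ≠ 0 := by
    intro h; rw [hdX, h] at hS4; simp at hS4
  have hdM : |M.det| = |N.det| * |M0.det| := by rw [hNM, Matrix.det_mul, abs_mul]
  -- the norm of X is linearly bounded
  have hbound : r / 12 * ‖X‖ ≤ Real.log (1 + X).det := by
    rcases eq_or_ne X 0 with hz | hz
    · rw [hz]; simp
    have hXp : 0 < ‖X‖ := norm_pos_iff.2 hz
    set τ := r / ‖X‖ with hτ
    have hτX : τ * ‖X‖ = r := by rw [hτ]; field_simp
    have hτ1 : 1 ≤ τ := by rw [hτ, le_div_iff₀ hXp]; linarith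
    have hnτ : ‖τ • X‖ = r := by
      rw [norm_smul, Real.norm_eq_abs, abs_of_pos (by positivity), hτX]
    obtain ⟨R, hR1, hR2, hR3, hR4, hR5, hR6⟩ := aux_sqrt (τ • X) (by simp [hXt])
      (by rw [hnτ]; linarith)
    have hRd : R.det ^ 2 = (1 + τ • X).det := by rw [← hR2, Matrix.det_mul, pow_two]
    have hadm : auxAdm (R * M0) := by
      intro z hz
      rw [← Matrix.mulVec_mulVec]
      set y := M0 *ᵥ auxZ z with hy
      have e1 : (R *ᵥ y) ⬝ᵥ (R *ᵥ y) = y ⬝ᵥ y + τ * (y ⬝ᵥ X *ᵥ y) := by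
        rw [aux_dot_mulVec, hR1, hR2, Matrix.add_mulVec, Matrix.one_mulVec, dotProduct_add,
          Matrix.smul_mulVec, dotProduct_smul, smul_eq_mul]
      have e2 : 1 ≤ y ⬝ᵥ y + (y ⬝ᵥ X *ᵥ y) := by
        have := hMA z hz
        rw [hNM, ← Matrix.mulVec_mulVec, ← hy, aux_dot_mulVec, ← hX1, Matrix.add_mulVec,
          Matrix.one_mulVec, dotProduct_add] at this
        exact this
      rw [e1]
      rcases hgap z hz with h | h
      · rw [← hy] at h
        nlinarith
      · rw [← hy] at h
        have h3 := (abs_le.1 (aux_quad X y)).1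
        have h4 : -(r * (y ⬝ᵥ y)) ≤ τ * (y ⬝ᵥ X *ᵥ y) := by
          rw [← hτX]
          nlinarith
        nlinarith
    have hRd0 : R.det ≠ 0 := by
      intro h; rw [← hRd, h] at hR4; simp at hR4
    have h1 := hmin (R * M0) (by rw [Matrix.det_mul]; exact mul_ne_zero hRd0 h0) hadm
    rw [Matrix.det_mul, abs_mul] at h1
    have h2 : 1 ≤ |R.det| := by
      by_contra hc; push Not at hc
      nlinarith
    have h3 : 0 ≤ Real.log (1 + τ • X).det := by
      apply Real.log_nonneg
      rw [← hRd, ← sq_abs]; nlinarith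
    rw [Matrix.trace_smul, hnτ, smul_eq_mul] at hR6
    have h4 : r ^ 2 / 6 ≤ τ * X.trace := by linarith
    have h5 : r * ‖X‖ / 6 ≤ X.trace := by
      have h6 : τ * (r * ‖X‖ / 6) = r ^ 2 / 6 := by
        calc τ * (r * ‖X‖ / 6) = r * (τ * ‖X‖) / 6 := by ring
          _ = _ := by rw [hτX]; ring
      rw [← h6] at h4
      exact le_of_mul_le_mul_left h4 (by linarith)
    nlinarith
  have hXb : ‖X‖ ≤ 24 / (r * |M0.det|) * (|M.det| - |M0.det|) := by
    have h1 : Real.log (1 + X).det ≤ 2 * (|N.det| - 1) := by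
      rw [hdX, ← sq_abs, Real.log_pow]
      have := Real.log_le_sub_one_of_pos (abs_pos.2 hNd)
      push_cast; linarith
    rw [hdM, div_mul_eq_mul_div, le_div_iff₀ (by positivity)]
    nlinarith
  have hSu : IsUnit S.det := by
    rw [isUnit_iff_ne_zero]; intro h
    rw [← hS2, Matrix.det_mul, h] at hS4; simp at hS4
  set U := N * S⁻¹ with hU
  have hUU : Uᵀ * U = 1 := by
    rw [hU, Matrix.transpose_mul, Matrix.transpose_nonsing_inv, hS1]
    calc S⁻¹ * Nᵀ * (N * S⁻¹) = S⁻¹ * (Nᵀ * N) * S⁻¹ := by simp only [Matrix.mul_assoc]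
      _ = (S⁻¹ * S) * (S * S⁻¹) := by rw [← hX1, ← hS2]; simp only [Matrix.mul_assoc]
      _ = 1 := by rw [Matrix.nonsing_inv_mul _ hSu, Matrix.mul_nonsing_inv _ hSu, Matrix.mul_one]
  have hUS : U * S = N := by
    rw [hU, Matrix.mul_assoc, Matrix.nonsing_inv_mul _ hSu, Matrix.mul_one]
  refine ⟨U * M0, ?_, ?_, ?_⟩
  · intro z hz
    rw [← Matrix.mulVec_mulVec, aux_dot_mulVec U, hUU, Matrix.one_mulVec]
    exact hA z hz
  · have : U.det ^ 2 = 1 := by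
      have := congrArg Matrix.det hUU
      rw [Matrix.det_mul, Matrix.det_transpose, Matrix.det_one] at this
      rw [pow_two, this]
    have : |U.det| = 1 := by
      rw [← sq_eq_sq₀ (abs_nonneg _) zero_le_one, sq_abs, this, one_pow]
    rw [Matrix.det_mul, abs_mul, this, one_mul]
  · have e1 : M - U * M0 = U * ((S - 1) * M0) := by
      rw [hNM, ← hUS]
      simp only [Matrix.sub_mul, Matrix.mul_sub, Matrix.mul_assoc, Matrix.one_mul]
    have e2 : ‖U * ((S - 1) * M0)‖ = ‖(S - 1) * M0‖ := by
      apply (sq_eq_sq₀ (norm_nonneg _) (norm_nonneg _)).1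
      rw [aux_frob_trace, aux_frob_trace]
      congr 1
      rw [Matrix.transpose_mul U]
      calc _ = ((S - 1) * M0)ᵀ * (Uᵀ * U) * ((S - 1) * M0) := by simp only [Matrix.mul_assoc]
        _ = _ := by rw [hUU, Matrix.mul_one]
    have e3 : ‖(S - 1) * M0‖ ≤ ‖S - 1‖ * ‖M0‖ := norm_mul_le _ _
    have e4 : ‖S - 1‖ * ‖M0‖ ≤ 24 / (r * |M0.det|) * (|M.det| - |M0.det|) * ‖M0‖ :=
      mul_le_mul_of_nonneg_right (hS3.trans hXb) (norm_nonneg _)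
    have e5 : 0 ≤ |M.det| - |M0.det| := by
      have := (norm_nonneg X).trans hXb
      exact nonneg_of_mul_nonneg_right this (by positivity)
    rw [e1, e2]
    nlinarith

def auxPD {ι : Type*} [Fintype ι] (A : Matrix ι ι ℝ) : Prop :=
  Aᵀ = A ∧ ∃ c > 0, ∀ x : ι → ℝ, c * (x ⬝ᵥ x) ≤ x ⬝ᵥ A *ᵥ x

lemma aux_dot_nonneg {ι : Type*} [Fintype ι] (x : ι → ℝ) : 0 ≤ x ⬝ᵥ x := by
  simp only [dotProduct]; exact Finset.sum_nonneg fun i _ => mul_self_nonneg _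

lemma aux_congr_dot {ι : Type*} [Fintype ι] (A U : Matrix ι ι ℝ) (x : ι → ℝ) :
    x ⬝ᵥ (Uᵀ * A * U) *ᵥ x = (U *ᵥ x) ⬝ᵥ A *ᵥ (U *ᵥ x) := by
  rw [← Matrix.mulVec_mulVec, ← Matrix.mulVec_mulVec, Matrix.dotProduct_mulVec x,
    Matrix.vecMul_transpose]

lemma auxPD_congr {ι : Type*} [Fintype ι] [DecidableEq ι] {A U : Matrix ι ι ℝ} (hA : auxPD A)
    (hU : U.det ≠ 0) : auxPD (Uᵀ * A * U) := by
  obtain ⟨h1, c, hc, h2⟩ := hA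
  have hu : IsUnit U.det := isUnit_iff_ne_zero.2 hU
  refine ⟨by simp [Matrix.transpose_mul, h1, Matrix.mul_assoc], c / (‖(U⁻¹)ᵀ * U⁻¹‖ + 1),
    by positivity, fun x => ?_⟩
  rw [aux_congr_dot]
  refine le_trans ?_ (h2 _)
  have e1 : U⁻¹ *ᵥ (U *ᵥ x) = x := by
    rw [Matrix.mulVec_mulVec, Matrix.nonsing_inv_mul _ hu, Matrix.one_mulVec]
  have e2 := aux_dot_mulVec U⁻¹ (U *ᵥ x)
  have e3 := (abs_le.1 (aux_quad ((U⁻¹)ᵀ * U⁻¹) (U *ᵥ x))).2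
  rw [e1] at e2
  rw [← e2] at e3
  rw [div_mul_eq_mul_div, div_le_iff₀ (by positivity)]
  nlinarith [aux_dot_nonneg (U *ᵥ x)]

def auxCol {ι : Type*} (U : Matrix ι ι ℤ) (i : ι) : ι → ℝ := fun k => (U k i : ℝ)

def auxG {ι : Type*} [Fintype ι] (A : Matrix ι ι ℝ) (U : Matrix ι ι ℤ) (i : ι) : ℝ :=
  auxCol U i ⬝ᵥ A *ᵥ auxCol U i

def auxRed (ι : Type*) [Fintype ι] [DecidableEq ι] : Prop :=
  ∃ C > 0, ∀ A : Matrix ι ι ℝ, auxPD A → ∃ U : Matrix ι ι ℤ, IsUnit U.det ∧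
    ∏ i, auxG A U i ≤ C * A.det

lemma auxRed_equiv {ι κ : Type*} [Fintype ι] [DecidableEq ι] [Fintype κ] [DecidableEq κ]
    (e : ι ≃ κ) (h : auxRed κ) : auxRed ι := by
  obtain ⟨C, hC, h⟩ := h
  have hdot : ∀ x y : κ → ℝ, (x ∘ e) ⬝ᵥ (y ∘ e) = x ⬝ᵥ y := fun x y => by
    simp only [dotProduct, Function.comp]
    exact e.sum_comp (fun i => x i * y i)
  have hq : ∀ (A : Matrix ι ι ℝ) (x : κ → ℝ),
      x ⬝ᵥ (A.submatrix e.symm e.symm) *ᵥ x = (x ∘ e) ⬝ᵥ A *ᵥ (x ∘ e) := by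
    intro A x
    rw [← hdot]
    congr 1
    ext i
    simp only [Matrix.mulVec, Function.comp, dotProduct, Matrix.submatrix_apply, Equiv.symm_apply_apply]
    rw [← e.sum_comp]
    simp
  refine ⟨C, hC, fun A hA => ?_⟩
  obtain ⟨U, hU, hU2⟩ := h (A.submatrix e.symm e.symm) (by
    obtain ⟨h1, c, hc, h2⟩ := hA
    refine ⟨by rw [Matrix.transpose_submatrix, h1], c, hc, fun x => ?_⟩
    rw [hq, ← hdot]
    exact h2 _)
  refine ⟨U.submatrix e e, by rwa [Matrix.det_submatrix_equiv_self], ?_⟩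
  rw [Matrix.det_submatrix_equiv_self] at hU2
  refine le_trans (le_of_eq ?_) hU2
  rw [← e.prod_comp]
  refine Finset.prod_congr rfl fun i _ => ?_
  rw [auxG, auxG, hq]
  rfl

lemma aux_schur {κ : Type*} [Fintype κ] [DecidableEq κ] (A : Matrix (Unit ⊕ κ) (Unit ⊕ κ) ℝ)
    (hA : auxPD A) :
    ∃ (a : ℝ) (b : κ → ℝ) (B : Matrix κ κ ℝ), 0 < a ∧ auxPD B ∧ A.det = a * B.det ∧
      ∀ (t : ℝ) (x : κ → ℝ), Sum.elim (fun _ => t) x ⬝ᵥ A *ᵥ (Sum.elim (fun _ => t) x) =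
        a * (t + (b ⬝ᵥ x) / a) ^ 2 + x ⬝ᵥ B *ᵥ x := by
  obtain ⟨h1, c, hc, h2⟩ := hA
  have hsym : ∀ i j, A i j = A j i := fun i j => by
    conv_lhs => rw [← h1]
    rfl
  set a := A (Sum.inl ()) (Sum.inl ()) with ha
  set b : κ → ℝ := fun j => A (Sum.inl ()) (Sum.inr j) with hb
  set B : Matrix κ κ ℝ := Matrix.of fun i j => A (Sum.inr i) (Sum.inr j) - b i * b j / a with hB
  have hab : ∀ i, A (Sum.inl ()) (Sum.inr i) = b i := fun i => rfl
  have hba : ∀ i, A (Sum.inr i) (Sum.inl ()) = b i := fun i => hsym _ _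
  have hapos : 0 < a := by
    have := h2 (Sum.elim (fun _ => 1) (fun _ => 0))
    simp [dotProduct, Matrix.mulVec] at this
    linarith
  have hquad : ∀ (t : ℝ) (x : κ → ℝ), Sum.elim (fun _ => t) x ⬝ᵥ A *ᵥ (Sum.elim (fun _ => t) x) =
        a * (t + (b ⬝ᵥ x) / a) ^ 2 + x ⬝ᵥ B *ᵥ x := by
    intro t x
    have e1 : x ⬝ᵥ B *ᵥ x = (∑ i, x i * ∑ j, A (Sum.inr i) (Sum.inr j) * x j) -
        (b ⬝ᵥ x) ^ 2 / a := by
      simp only [dotProduct, Matrix.mulVec, hB, Matrix.of_apply]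
      rw [pow_two, Finset.sum_mul_sum, Finset.sum_div, ← Finset.sum_sub_distrib]
      refine Finset.sum_congr rfl fun i _ => ?_
      rw [Finset.sum_div, Finset.mul_sum, Finset.mul_sum, ← Finset.sum_sub_distrib]
      refine Finset.sum_congr rfl fun j _ => ?_
      ring
    have e2 : Sum.elim (fun _ => t) x ⬝ᵥ A *ᵥ (Sum.elim (fun _ => t) x) =
        t * (a * t + b ⬝ᵥ x) + ((b ⬝ᵥ x) * t +
          ∑ i, x i * ∑ j, A (Sum.inr i) (Sum.inr j) * x j) := by
      simp only [dotProduct, Matrix.mulVec, Fintype.sum_sum_type, Sum.elim_inl, Sum.elim_inr,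
        Finset.univ_unique, Finset.sum_singleton, PUnit.default_eq_unit, hab, hba, ← ha]
      congr 1
      rw [Finset.sum_mul, ← Finset.sum_add_distrib]
      refine Finset.sum_congr rfl fun i _ => ?_
      ring
    rw [e1, e2]
    field_simp
    ring
  refine ⟨a, b, B, hapos, ⟨?_, c, hc, ?_⟩, ?_, hquad⟩
  · ext i j
    simp only [hB, Matrix.transpose_apply, Matrix.of_apply, hsym (Sum.inr j) (Sum.inr i), mul_comm]
  · intro x
    have := h2 (Sum.elim (fun _ => -((b ⬝ᵥ x) / a)) x)
    rw [hquad] at this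
    simp only [neg_add_cancel] at this
    have e : x ⬝ᵥ x ≤ Sum.elim (fun _ : Unit => -((b ⬝ᵥ x) / a)) x ⬝ᵥ
        Sum.elim (fun _ : Unit => -((b ⬝ᵥ x) / a)) x := by
      rw [sumElim_dotProduct_sumElim]
      linarith [aux_dot_nonneg (fun _ : Unit => -((b ⬝ᵥ x) / a))]
    nlinarith
  · have hinv : IsUnit A.toBlocks₁₁.det := by
      rw [isUnit_iff_ne_zero, Matrix.det_unique]
      exact hapos.ne'
    let _ := Matrix.invertibleOfIsUnitDet _ hinv
    conv_lhs => rw [← Matrix.fromBlocks_toBlocks A]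
    rw [Matrix.det_fromBlocks₁₁, Matrix.det_unique]
    congr 2
    rw [Matrix.invOf_eq_nonsing_inv]
    ext i j
    simp only [Matrix.sub_apply, Matrix.mul_apply, hB, Matrix.of_apply, Finset.univ_unique,
      Finset.sum_singleton, Matrix.inv_def, Matrix.adjugate_subsingleton, Matrix.det_unique]
    simp only [Matrix.smul_apply, Matrix.one_apply_eq, Ring.inverse_eq_inv', smul_eq_mul, mul_one]
    have e1 : A.toBlocks₂₁ i default = b i := hba i
    have e2 : A.toBlocks₁₂ default j = b j := hab j
    have e3 : A.toBlocks₁₁ default default = a := rfl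
    rw [e1, e2, e3]
    simp only [Matrix.toBlocks₂₂, Matrix.of_apply]
    ring

lemma auxCol_mul {ι : Type*} [Fintype ι] (U V : Matrix ι ι ℤ) (i : ι) :
    auxCol (U * V) i = (U.map (Int.cast : ℤ → ℝ)) *ᵥ auxCol V i := by
  ext k
  simp [auxCol, Matrix.mul_apply, Matrix.mulVec, dotProduct]

lemma auxG_mul {ι : Type*} [Fintype ι] (A : Matrix ι ι ℝ) (U V : Matrix ι ι ℤ) (i : ι) :
    auxG A (U * V) i =
      auxG ((U.map (Int.cast : ℤ → ℝ))ᵀ * A * (U.map (Int.cast : ℤ → ℝ))) V i := by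
  rw [auxG, auxG, aux_congr_dot, auxCol_mul]

lemma aux_det_map {ι : Type*} [Fintype ι] [DecidableEq ι] (U : Matrix ι ι ℤ) :
    (U.map (Int.cast : ℤ → ℝ)).det = (U.det : ℝ) := by
  have := (Int.castRingHom ℝ).map_det U
  simpa [RingHom.mapMatrix_apply] using this.symm

lemma aux_unit_sq {ι : Type*} [Fintype ι] [DecidableEq ι] {U : Matrix ι ι ℤ} (h : IsUnit U.det) :
    (U.map (Int.cast : ℤ → ℝ)).det * (U.map (Int.cast : ℤ → ℝ)).det = 1 := by
  rw [aux_det_map]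
  rcases Int.isUnit_iff.1 h with h | h <;> simp [h]

lemma auxG_lower {ι : Type*} [Fintype ι] [DecidableEq ι] {A : Matrix ι ι ℝ} (hA : auxPD A) :
    ∃ c > 0, ∀ U : Matrix ι ι ℤ, IsUnit U.det → ∀ i, c ≤ auxG A U i := by
  obtain ⟨-, c, hc, h2⟩ := hA
  refine ⟨c, hc, fun U hU i => ?_⟩
  refine le_trans ?_ (h2 _)
  have hne : ∃ k, U k i ≠ 0 := by
    by_contra hcon
    push Not at hcon
    rw [Matrix.det_eq_zero_of_column_eq_zero i hcon] at hU
    simp at hU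
  obtain ⟨k, hk⟩ := hne
  have h4 : auxCol U i k * auxCol U i k ≤ auxCol U i ⬝ᵥ auxCol U i :=
      Finset.single_le_sum (f := fun k => auxCol U i k * auxCol U i k)
        (fun i _ => mul_self_nonneg _) (Finset.mem_univ k)
  have h5 : (1 : ℝ) ≤ auxCol U i k * auxCol U i k := by
    have : 1 ≤ U k i * U k i := by
      have := mul_self_pos.2 hk
      lia
    simp only [auxCol]
    exact_mod_cast this
  nlinarith

lemma auxRed_step {κ : Type*} [Fintype κ] [DecidableEq κ] (h : auxRed κ) : auxRed (Unit ⊕ κ) := by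
  obtain ⟨C, hC, h⟩ := h
  refine ⟨2 ^ Fintype.card κ * C, by positivity, fun A hA => ?_⟩
  obtain ⟨c, hc, hlow⟩ := auxG_lower hA
  set s : Set ℝ := {x | ∃ U : Matrix (Unit ⊕ κ) (Unit ⊕ κ) ℤ, IsUnit U.det ∧
    x = auxG A U (Sum.inl ())} with hs
  have hsb : BddBelow s := ⟨c, by rintro x ⟨U, hU, rfl⟩; exact hlow U hU _⟩
  have hsn : s.Nonempty := ⟨_, 1, by simp, rfl⟩
  have hv : c ≤ sInf s := le_csInf hsn (by rintro x ⟨U, hU, rfl⟩; exact hlow U hU _)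
  obtain ⟨x, ⟨U, hU, rfl⟩, hx⟩ := exists_lt_of_csInf_lt hsn (show sInf s < 2 * sInf s by linarith)
  have hall : ∀ V : Matrix (Unit ⊕ κ) (Unit ⊕ κ) ℤ, IsUnit V.det → ∀ i,
      sInf s ≤ auxG A V i := by
    intro V hV i
    refine csInf_le hsb ⟨V.submatrix id (Equiv.swap (Sum.inl ()) i), ?_, ?_⟩
    · rw [Matrix.det_permute']
      refine IsUnit.mul ?_ hV
      exact Units.isUnit _
    · have : auxCol (V.submatrix id (Equiv.swap (Sum.inl ()) i)) (Sum.inl ()) = auxCol V i := by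
        ext k; simp [auxCol]
      rw [auxG, auxG, this]
  have hUd := aux_unit_sq hU
  set R := U.map (Int.cast : ℤ → ℝ) with hR
  obtain ⟨a, b, B, ha, hB, hdet, hquad⟩ := aux_schur (Rᵀ * A * R)
    (auxPD_congr hA (by intro h; rw [h] at hUd; simp at hUd))
  obtain ⟨V, hV, hV2⟩ := h B hB
  set W : Matrix (Unit ⊕ κ) (Unit ⊕ κ) ℤ := Matrix.fromBlocks 1
    (Matrix.of fun _ j => - round ((b ⬝ᵥ auxCol V j) / a)) 0 V with hW
  have hWd : IsUnit W.det := by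
    rw [hW, Matrix.det_fromBlocks_zero₂₁]; simpa using hV
  have hUW : IsUnit (U * W).det := by rw [Matrix.det_mul]; exact hU.mul hWd
  have hc0 : auxG A (U * W) (Sum.inl ()) = a := by
    rw [auxG_mul, ← hR, auxG]
    have : auxCol W (Sum.inl ()) = Sum.elim (fun _ => 1) 0 := by
      ext k; rcases k with k | k <;> simp [auxCol, hW]
    rw [this, hquad]; simp
  have hc0' : auxG A U (Sum.inl ()) = a := by
    have := auxG_mul A U 1 (Sum.inl ())
    rw [mul_one] at this
    rw [this, ← hR, auxG]
    have : auxCol (1 : Matrix (Unit ⊕ κ) (Unit ⊕ κ) ℤ) (Sum.inl ()) = Sum.elim (fun _ => 1) 0 := by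
      ext k; rcases k with k | k <;> simp [auxCol]
    rw [this, hquad]; simp
  have hcj : ∀ j, auxG A (U * W) (Sum.inr j) ≤ a / 4 + auxG B V j := by
    intro j
    rw [auxG_mul, ← hR, auxG]
    have : auxCol W (Sum.inr j) =
        Sum.elim (fun _ => - (round ((b ⬝ᵥ auxCol V j) / a) : ℝ)) (auxCol V j) := by
      ext k; rcases k with k | k <;> simp [auxCol, hW]
    rw [this, hquad, auxG]
    have h1 := abs_le.1 (abs_sub_round ((b ⬝ᵥ auxCol V j) / a))
    have h2 : (-(round ((b ⬝ᵥ auxCol V j) / a) : ℝ) + (b ⬝ᵥ auxCol V j) / a) ^ 2 ≤ 1 / 4 := by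
      nlinarith [h1.1, h1.2]
    nlinarith
  have hcj2 : ∀ j, auxG A (U * W) (Sum.inr j) ≤ 2 * auxG B V j := by
    intro j
    have h1 := hcj j
    have h2 := hall (U * W) hUW (Sum.inr j)
    rw [hc0'] at hx
    linarith
  refine ⟨U * W, hUW, ?_⟩
  have hdA : A.det = a * B.det := by
    rw [← hdet, Matrix.det_mul, Matrix.det_mul, Matrix.det_transpose]
    linear_combination (-A.det) * hUd
  rw [Fintype.prod_sum_type, Finset.univ_unique, Finset.prod_singleton, PUnit.default_eq_unit, hc0,
    hdA]
  have hp : ∏ j, auxG A (U * W) (Sum.inr j) ≤ 2 ^ Fintype.card κ * ∏ j, auxG B V j := by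
    have : (2 : ℝ) ^ Fintype.card κ * ∏ j, auxG B V j = ∏ j, (2 * auxG B V j) := by
      rw [Finset.prod_mul_distrib, Finset.prod_const, Finset.card_univ]
    rw [this]
    refine Finset.prod_le_prod (fun j _ => ?_) fun j _ => hcj2 j
    exact hc.le.trans (hlow _ hUW _)
  calc a * ∏ j, auxG A (U * W) (Sum.inr j) ≤ a * (2 ^ Fintype.card κ * (C * B.det)) := by
        refine mul_le_mul_of_nonneg_left (hp.trans ?_) ha.le
        exact mul_le_mul_of_nonneg_left hV2 (by positivity)
    _ = _ := by ring

lemma auxRed_fin : ∀ n : ℕ, auxRed (Fin n)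
  | 0 => ⟨1, one_pos, fun A _ => ⟨1, by simp, by simp⟩⟩
  | n + 1 => by
    have e : Fin (n + 1) ≃ Unit ⊕ Fin n :=
      (finSuccEquiv n).trans ((Equiv.optionEquivSumPUnit _).trans (Equiv.sumComm _ _))
    exact auxRed_equiv e (auxRed_step (auxRed_fin n))

lemma aux_vec {n : ℕ} (z : Fin n → ℤ) :
    (∑ i, (z i : ℝ) • EuclideanSpace.single i (1 : ℝ) : Euc n) = WithLp.toLp 2 (auxZ z) := by
  ext j
  simp [auxZ, Finset.sum_apply, Pi.single_apply]

lemma aux_mem_lat {n : ℕ} (M : Matrix (Fin n) (Fin n) ℝ) (v : Euc n) :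
    v ∈ latticeSet (Matrix.toEuclideanLin M) ↔ ∃ z : Fin n → ℤ, v = WithLp.toLp 2 (M *ᵥ auxZ z) := by
  simp only [latticeSet, Set.mem_ofPred_eq, aux_vec, Matrix.toLpLin_toLp, Matrix.toLin'_apply]

lemma aux_frobNorm {n : ℕ} (M : Matrix (Fin n) (Fin n) ℝ) :
    frobNorm (Matrix.toEuclideanLin M) = ‖M‖ := by
  rw [← Real.sqrt_sq (norm_nonneg M), aux_frob_sq, Finset.sum_comm, frobNorm]
  congr 1
  refine Finset.sum_congr rfl fun j _ => Finset.sum_congr rfl fun i _ => ?_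
  simp [Matrix.toLpLin_apply]

lemma aux_det {n : ℕ} (M : Matrix (Fin n) (Fin n) ℝ) :
    LinearMap.det (Matrix.toEuclideanLin M) = M.det := LinearMap.det_toLpLin _ _

lemma aux_map_mulVec {n : ℕ} (U : Matrix (Fin n) (Fin n) ℤ) (z : Fin n → ℤ) :
    (U.map (Int.cast : ℤ → ℝ)) *ᵥ auxZ z = auxZ (U *ᵥ z) := by
  ext i; simp [auxZ, Matrix.mulVec, dotProduct]

lemma aux_lat_sub {n : ℕ} (M : Matrix (Fin n) (Fin n) ℝ) (U : Matrix (Fin n) (Fin n) ℤ) :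
    latticeSet (Matrix.toEuclideanLin (M * U.map (Int.cast : ℤ → ℝ))) ⊆
      latticeSet (Matrix.toEuclideanLin M) := by
  intro v hv
  rw [aux_mem_lat] at hv ⊢
  obtain ⟨z, rfl⟩ := hv
  exact ⟨U *ᵥ z, by rw [← Matrix.mulVec_mulVec, aux_map_mulVec]⟩

lemma aux_lat_eq {n : ℕ} (M : Matrix (Fin n) (Fin n) ℝ) (U : Matrix (Fin n) (Fin n) ℤ)
    (hU : IsUnit U.det) :
    latticeSet (Matrix.toEuclideanLin (M * U.map (Int.cast : ℤ → ℝ))) =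
      latticeSet (Matrix.toEuclideanLin M) := by
  apply Set.Subset.antisymm (aux_lat_sub M U)
  have h := aux_lat_sub (M * U.map (Int.cast : ℤ → ℝ)) U⁻¹
  have e : M * U.map (Int.cast : ℤ → ℝ) * (U⁻¹).map (Int.cast : ℤ → ℝ) = M := by
    have : (U.map (Int.cast : ℤ → ℝ)) * (U⁻¹).map (Int.cast : ℤ → ℝ) = 1 := by
      have h1 := Matrix.map_mul (L := U) (M := U⁻¹) (f := Int.castRingHom ℝ)
      rw [Matrix.mul_nonsing_inv _ hU] at h1
      simpa using h1.symm
    rw [Matrix.mul_assoc, this, Matrix.mul_one]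
  rwa [e] at h

lemma aux_lat_factor {n : ℕ} (M M' : Matrix (Fin n) (Fin n) ℝ)
    (h : latticeSet (Matrix.toEuclideanLin M') ⊆ latticeSet (Matrix.toEuclideanLin M)) :
    ∃ U : Matrix (Fin n) (Fin n) ℤ, M' = M * U.map (Int.cast : ℤ → ℝ) := by
  have h1 : ∀ j, ∃ z : Fin n → ℤ, M' *ᵥ auxZ (Pi.single j 1) = M *ᵥ auxZ z := by
    intro j
    obtain ⟨z, hz⟩ := (aux_mem_lat M _).1 (h ((aux_mem_lat M' _).2 ⟨Pi.single j 1, rfl⟩))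
    exact ⟨z, by simpa using hz⟩
  choose z hz using h1
  refine ⟨Matrix.of fun i j => z j i, ?_⟩
  ext i j
  have h2 := congrFun (hz j) i
  have h3 : auxZ (Pi.single j 1 : Fin n → ℤ) = Pi.single j 1 := by
    ext k; by_cases hk : k = j
    · subst hk; simp [auxZ]
    · simp [auxZ, hk]
  rw [h3, Matrix.mulVec_single_one] at h2
  simp only [Matrix.col_apply] at h2
  rw [h2]
  simp [Matrix.mulVec, dotProduct, Matrix.mul_apply, auxZ]

lemma aux_latDet {n : ℕ} (M : Matrix (Fin n) (Fin n) ℝ) (h0 : M.det ≠ 0) :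
    latDet (latticeSet (Matrix.toEuclideanLin M)) = |M.det| := by
  have : {d | ∃ T : Euc n →ₗ[ℝ] Euc n, latticeSet (Matrix.toEuclideanLin M) = latticeSet T ∧
      d = |LinearMap.det T|} = {|M.det|} := by
    ext d
    simp only [Set.mem_ofPred_eq, Set.mem_singleton_iff]
    constructor
    · rintro ⟨T, hT, rfl⟩
      obtain ⟨M', rfl⟩ := (Matrix.toEuclideanLin (𝕜 := ℝ) (m := Fin n) (n := Fin n)).surjective T
      rw [aux_det]
      obtain ⟨U, hU⟩ := aux_lat_factor M M' hT.symm.subset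
      obtain ⟨V, hV⟩ := aux_lat_factor M' M hT.subset
      have e1 : M'.det = M.det * U.det := by
        conv_lhs => rw [hU]
        rw [Matrix.det_mul, aux_det_map]
      have e2 : M.det = M'.det * V.det := by
        conv_lhs => rw [hV]
        rw [Matrix.det_mul, aux_det_map]
      have e3 : (U.det : ℝ) * V.det = 1 := by
        apply mul_left_cancel₀ h0
        rw [← mul_assoc, ← e1, ← e2, mul_one]
      have e4 : U.det * V.det = 1 := by exact_mod_cast e3
      rcases Int.isUnit_iff.1 (IsUnit.of_mul_eq_one _ e4) with h | h
      all_goals rw [e1, h]; simp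
    · rintro rfl
      exact ⟨_, rfl, by rw [aux_det]⟩
  rw [latDet, this, csInf_singleton]

lemma aux_norm_sq {n : ℕ} (y : Fin n → ℝ) : ‖(WithLp.toLp 2 y : Euc n)‖ ^ 2 = y ⬝ᵥ y := by
  rw [EuclideanSpace.norm_sq_eq]
  simp [dotProduct, pow_two]

lemma aux_adm_iff {n : ℕ} (M : Matrix (Fin n) (Fin n) ℝ) (h0 : M.det ≠ 0) :
    IsAdmissible (latticeSet (Matrix.toEuclideanLin M)) (unitBall n) ↔ auxAdm M := by
  have hu : IsUnit M.det := isUnit_iff_ne_zero.2 h0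
  rw [IsAdmissible, unitBall, interior_closedBall _ one_ne_zero]
  constructor
  · intro h z hz
    by_contra hc
    push Not at hc
    have h1 := @h (WithLp.toLp 2 (M *ᵥ auxZ z)) ⟨(aux_mem_lat M _).2 ⟨z, rfl⟩, by
      rw [mem_ball_zero_iff, ← abs_one, ← abs_of_nonneg (norm_nonneg _), ← sq_lt_sq, aux_norm_sq]
      simpa using hc⟩
    have h2 : M *ᵥ auxZ z = 0 := by simpa using h1
    apply hz
    have h3 : auxZ z = 0 := by
      have : M⁻¹ *ᵥ (M *ᵥ auxZ z) = auxZ z := by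
        rw [Matrix.mulVec_mulVec, Matrix.nonsing_inv_mul _ hu, Matrix.one_mulVec]
      rw [← this, h2, Matrix.mulVec_zero]
    ext i
    have := congrFun h3 i
    simpa [auxZ] using this
  · rintro h v ⟨hv, hb⟩
    obtain ⟨z, rfl⟩ := (aux_mem_lat M _).1 hv
    by_cases hz : z = 0
    · subst hz
      have : auxZ (0 : Fin n → ℤ) = 0 := by ext; simp [auxZ]
      simp [this]
    · exfalso
      have h1 := h z hz
      rw [← aux_norm_sq] at h1
      rw [mem_ball_zero_iff] at hb
      nlinarith [norm_nonneg (WithLp.toLp 2 (M *ᵥ auxZ z) : Euc n)]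

lemma aux_exists_s7 {n : ℕ} {Λ : Set (Euc n)} (h : IsLattice Λ) :
    ∃ M : Matrix (Fin n) (Fin n) ℝ, M.det ≠ 0 ∧ Λ = latticeSet (Matrix.toEuclideanLin M) := by
  obtain ⟨T, h1, h2⟩ := h
  obtain ⟨M, rfl⟩ := (Matrix.toEuclideanLin (𝕜 := ℝ) (m := Fin n) (n := Fin n)).surjective T
  exact ⟨M, by rwa [aux_det] at h1, h2⟩

lemma aux_crit_le {n : ℕ} (M : Matrix (Fin n) (Fin n) ℝ) (h0 : M.det ≠ 0) (hA : auxAdm M) :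
    critDet (unitBall n) ≤ |M.det| := by
  apply csInf_le
  · refine ⟨0, ?_⟩
    rintro d ⟨Λ, hΛ, -, rfl⟩
    obtain ⟨M, h, rfl⟩ := aux_exists_s7 hΛ
    rw [aux_latDet M h]
    exact abs_nonneg _
  · exact ⟨_, ⟨_, by rwa [aux_det], rfl⟩, (aux_adm_iff M h0).2 hA, (aux_latDet M h0).symm⟩

lemma aux_one_le_prod {ι : Type*} (s : Finset ι) (f : ι → ℝ) (h : ∀ i, 1 ≤ f i) :
    1 ≤ ∏ i ∈ s, f i := by
  calc (1 : ℝ) = ∏ i ∈ s, 1 := by simp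
    _ ≤ _ := Finset.prod_le_prod (fun _ _ => zero_le_one) fun i _ => h i

lemma aux_reduced (n : ℕ) : ∃ C > 0, ∀ M : Matrix (Fin n) (Fin n) ℝ, M.det ≠ 0 → auxAdm M →
    ∃ M' : Matrix (Fin n) (Fin n) ℝ, latticeSet (Matrix.toEuclideanLin M') =
      latticeSet (Matrix.toEuclideanLin M) ∧ M'.det ≠ 0 ∧ |M'.det| = |M.det| ∧ auxAdm M' ∧
      ‖M'‖ ^ 2 ≤ n * (C * |M.det| ^ 2) ∧ 1 ≤ C * |M.det| ^ 2 := by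
  obtain ⟨C, hC, h⟩ := auxRed_fin n
  refine ⟨C, hC, fun M h0 hA => ?_⟩
  have hpd1 : auxPD (1 : Matrix (Fin n) (Fin n) ℝ) := ⟨by simp, 1, one_pos, fun x => by simp⟩
  have hpd := auxPD_congr hpd1 h0
  rw [Matrix.mul_one] at hpd
  obtain ⟨U, hU, hU2⟩ := h _ hpd
  have hUs := aux_unit_sq hU
  set R := U.map (Int.cast : ℤ → ℝ) with hR
  have hl := aux_lat_eq M U hU
  rw [← hR] at hl
  have hRa : |R.det| = 1 := by
    rw [← sq_eq_sq₀ (abs_nonneg _) zero_le_one, sq_abs, one_pow, pow_two, hUs]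
  have hda : |(M * R).det| = |M.det| := by rw [Matrix.det_mul, abs_mul, hRa, mul_one]
  have hd0 : (M * R).det ≠ 0 := by rw [← abs_pos, hda, abs_pos]; exact h0
  have hadm : auxAdm (M * R) := by
    rw [← aux_adm_iff _ hd0, hl, aux_adm_iff _ h0]; exact hA
  have hG : ∀ j, auxG (Mᵀ * M) U j = ∑ i, (M * R) i j ^ 2 := by
    intro j
    rw [auxG, ← aux_dot_mulVec]
    simp [dotProduct, Matrix.mulVec, Matrix.mul_apply, auxCol, hR, pow_two]
  have hG1 : ∀ j, 1 ≤ auxG (Mᵀ * M) U j := by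
    intro j
    rw [auxG, ← aux_dot_mulVec]
    apply hA (fun i => U i j)
    intro h
    rw [Matrix.det_eq_zero_of_column_eq_zero j (fun i => congrFun h i)] at hU
    simp at hU
  rw [Matrix.det_mul, Matrix.det_transpose, ← pow_two, ← sq_abs] at hU2
  refine ⟨M * R, hl, hd0, hda, hadm, ?_, ?_⟩
  · rw [aux_frob_sq, Finset.sum_comm]
    calc _ ≤ ∑ j : Fin n, C * |M.det| ^ 2 := by
          refine Finset.sum_le_sum fun j _ => ?_
          rw [← hG]
          refine le_trans ?_ hU2
          rw [← Finset.mul_prod_erase _ _ (Finset.mem_univ j)]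
          refine le_mul_of_one_le_right (by linarith [hG1 j]) ?_
          exact aux_one_le_prod _ _ hG1
      _ = _ := by simp
  · exact le_trans (aux_one_le_prod _ _ hG1) hU2

lemma aux_main (n : ℕ) :
    ∃ ε > (0 : ℝ), ∃ C > (0 : ℝ), ∀ Λ : Set (Euc n), IsLattice Λ →
      IsAdmissible Λ (unitBall n) → latDet Λ - critDet (unitBall n) < ε →
      ∃ Λ' : Set (Euc n), IsCriticalLattice Λ' (unitBall n) ∧
        latDist Λ Λ' ≤ C * (latDet Λ - critDet (unitBall n)) := by
  by_contra hcon
  push Not at hcon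
  obtain ⟨K, hK, hred⟩ := aux_reduced n
  set D := critDet (unitBall n) with hD
  have hseq : ∀ k : ℕ, ∃ M : Matrix (Fin n) (Fin n) ℝ, M.det ≠ 0 ∧ auxAdm M ∧
      |M.det| - D < 1 / ((k : ℝ) + 1) ∧ ‖M‖ ^ 2 ≤ n * (K * |M.det| ^ 2) ∧ 1 ≤ K * |M.det| ^ 2 ∧
      ∀ Λ' : Set (Euc n), IsCriticalLattice Λ' (unitBall n) →
        ((k : ℝ) + 1) * (|M.det| - D) < latDist (latticeSet (Matrix.toEuclideanLin M)) Λ' := by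
    intro k
    obtain ⟨Λ, h1, h2, h3, h4⟩ := hcon (1 / ((k : ℝ) + 1)) (by positivity) ((k : ℝ) + 1)
      (by positivity)
    obtain ⟨M, hM, rfl⟩ := aux_exists_s7 h1
    obtain ⟨M', e1, e2, e3, e4, e5, e6⟩ := hred M hM ((aux_adm_iff M hM).1 h2)
    rw [← e3] at e5 e6
    rw [← e1, aux_latDet M' e2] at h3 h4
    exact ⟨M', e2, e4, h3, e5, e6, h4⟩
  choose M hM0 hMA hMd hMn hMl hMc using hseq
  have hDle : ∀ k, D ≤ |(M k).det| := fun k => aux_crit_le _ (hM0 k) (hMA k)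
  have hlim : Tendsto (fun k => |(M k).det|) atTop (𝓝 D) := by
    have h1 : Tendsto (fun k : ℕ => D + 1 / ((k : ℝ) + 1)) atTop (𝓝 (D + 0)) :=
      tendsto_const_nhds.add tendsto_one_div_add_atTop_nhds_zero_nat
    rw [add_zero] at h1
    exact tendsto_of_tendsto_of_tendsto_of_le_of_le tendsto_const_nhds h1 hDle
      (fun k => by have := hMd k; linarith)
  have hD0 : 0 ≤ D := ge_of_tendsto' hlim fun k => abs_nonneg _
  have hDpos : 0 < D := by
    have : 1 ≤ K * D ^ 2 := ge_of_tendsto' ((hlim.pow 2).const_mul K) hMl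
    rcases hD0.eq_or_lt with h | h
    · rw [← h] at this; norm_num at this
    · exact h
  have hbd : ∀ k, M k ∈ Metric.closedBall (0 : Matrix (Fin n) (Fin n) ℝ)
      (√(n * (K * (D + 1) ^ 2))) := by
    intro k
    rw [mem_closedBall_zero_iff]
    apply Real.le_sqrt_of_sq_le
    refine (hMn k).trans ?_
    have : 1 / ((k : ℝ) + 1) ≤ 1 := by
      rw [div_le_one (by positivity)]; linarith [(Nat.cast_nonneg k : (0 : ℝ) ≤ k)]
    have : |(M k).det| ≤ D + 1 := by have := hMd k; linarith
    gcongr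
  obtain ⟨M0, -, φ, hφ, hconv⟩ := (isCompact_closedBall _ _).tendsto_subseq hbd
  have hdet0 : |M0.det| = D := by
    have h1 : Tendsto (fun k => |(M (φ k)).det|) atTop (𝓝 |M0.det|) := by
      have : Continuous fun A : Matrix (Fin n) (Fin n) ℝ => |A.det| := by fun_prop
      exact (this.tendsto M0).comp hconv
    exact tendsto_nhds_unique h1 (hlim.comp hφ.tendsto_atTop)
  have h00 : M0.det ≠ 0 := by rw [← abs_pos, hdet0]; exact hDpos
  have hA0 : auxAdm M0 := by
    intro z hz
    have : Continuous fun A : Matrix (Fin n) (Fin n) ℝ => (A *ᵥ auxZ z) ⬝ᵥ (A *ᵥ auxZ z) := by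
      fun_prop
    exact ge_of_tendsto' ((this.tendsto M0).comp hconv) fun k => hMA (φ k) z hz
  obtain ⟨C, hC, hev⟩ := aux_local M0 h00 hA0
    (fun A h1 h2 => by rw [hdet0]; exact aux_crit_le A h1 h2)
  have hev2 := hconv.eventually hev
  have hev3 : ∀ᶠ k in atTop, C ≤ (φ k : ℝ) + 1 := by
    filter_upwards [(tendsto_natCast_atTop_atTop (R := ℝ)).comp hφ.tendsto_atTop |>.eventually_ge_atTop C]
      with k hk
    have hk' : C ≤ (φ k : ℝ) := hk
    linarith
  obtain ⟨k, hk2, hk3⟩ := (hev2.and hev3).exists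
  obtain ⟨M', hA', hd', hn'⟩ := hk2 (hMA (φ k))
  rw [hdet0] at hd' hn'
  have hd0' : M'.det ≠ 0 := by rw [← abs_pos, hd']; exact hDpos
  have hcrit : IsCriticalLattice (latticeSet (Matrix.toEuclideanLin M')) (unitBall n) :=
    ⟨⟨_, by rwa [aux_det], rfl⟩, (aux_adm_iff M' hd0').2 hA', by rw [aux_latDet M' hd0', hd']⟩
  have h1 := hMc (φ k) _ hcrit
  have h2 : latDist (latticeSet (Matrix.toEuclideanLin (M (φ k))))
      (latticeSet (Matrix.toEuclideanLin M')) ≤ ‖M (φ k) - M'‖ := by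
    apply csInf_le
    · refine ⟨0, ?_⟩
      rintro d ⟨T, T', -, -, rfl⟩
      exact Real.sqrt_nonneg _
    · exact ⟨_, _, rfl, rfl, by rw [← map_sub, aux_frobNorm]⟩
  have h3 : C * (|(M (φ k)).det| - D) ≤ ((φ k : ℝ) + 1) * (|(M (φ k)).det| - D) :=
    mul_le_mul_of_nonneg_right hk3 (by linarith [hDle (φ k)])
  have hn2 : ‖M (φ k) - M'‖ ≤ C * (|(M (φ k)).det| - D) := hn'
  linarith
end Aux

/-- every admissible lattice for `Bⁿ` with nearly critical determinant is
close to some critical lattice of `Bⁿ`. -/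
theorem near_critical_lattice_close_to_critical (n : ℕ) (hn : 2 ≤ n) :
    ∃ ε > (0 : ℝ), ∃ C > (0 : ℝ), ∀ Λ : Set (Euc n), IsLattice Λ →
      IsAdmissible Λ (unitBall n) → latDet Λ - critDet (unitBall n) < ε →
      ∃ Λ' : Set (Euc n), IsCriticalLattice Λ' (unitBall n) ∧
        latDist Λ Λ' ≤ C * (latDet Λ - critDet (unitBall n)) := by
  exact aux_main n

end
end
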